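/- arXiv:2004.05330 — 2 statements merged into one kernel-verified Lean document; each statement's English description precedes it below -/
import Mathlib

section
/- Let k be a natural number and let C be an s-extremal singly even self-dual [24k+4, 12k+2, 4k+2] code. Then both neighbors N₁(C) = C₀ ∪ C₁ and N₃(C) = C₀ ∪ C₃ of C are also s-extremal singly even self-dual [24k+4, 12k+2, 4k+2] codes (i.e., each is singly even self-dual with minimum weight 4k+2, and its shadow has minimum weight 4k+2). -/
open Finset

/-- Hamming weight of a binary vector. -/
def wt {n : ℕ} (x : Fin n → ZMod 2) : ℕ := hammingNorm x

/-- The dual of a set of binary vectors with respect to the standard inner product. -/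
def dualSet {n : ℕ} (C : Set (Fin n → ZMod 2)) : Set (Fin n → ZMod 2) :=
  {x | ∀ y ∈ C, ∑ i, x i * y i = 0}

/-- A binary linear code is self-dual if it equals its dual code. -/
def IsSelfDual {n : ℕ} (C : Submodule (ZMod 2) (Fin n → ZMod 2)) : Prop :=
  (C : Set (Fin n → ZMod 2)) = dualSet (C : Set (Fin n → ZMod 2))

/-- A self-dual code is singly even if some codeword has weight not divisible by 4. -/
def IsSinglyEvenSelfDual {n : ℕ} (C : Submodule (ZMod 2) (Fin n → ZMod 2)) : Prop :=
  IsSelfDual C ∧ ∃ x ∈ C, ¬ (4 ∣ wt x)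

/-- The doubly even subcode `C₀` of `C` (as a set): codewords of weight ≡ 0 (mod 4). -/
def evenSub {n : ℕ} (C : Submodule (ZMod 2) (Fin n → ZMod 2)) : Set (Fin n → ZMod 2) :=
  {x | x ∈ C ∧ 4 ∣ wt x}

/-- The shadow `S = C₀^⊥ \ C` of a singly even self-dual code. -/
def shadow {n : ℕ} (C : Submodule (ZMod 2) (Fin n → ZMod 2)) : Set (Fin n → ZMod 2) :=
  dualSet (evenSub C) \ (C : Set (Fin n → ZMod 2))

/-- The minimum (nonzero) weight of a set of vectors. -/
noncomputable def minWtSet {n : ℕ} (S : Set (Fin n → ZMod 2)) : ℕ :=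
  sInf {w | ∃ x ∈ S, x ≠ 0 ∧ wt x = w}

/-- The minimum weight of a code. -/
noncomputable def minWt {n : ℕ} (C : Submodule (ZMod 2) (Fin n → ZMod 2)) : ℕ :=
  minWtSet (C : Set (Fin n → ZMod 2))

/-- A singly even self-dual code of length `n` is s-extremal if
`d(S) = n/2 + 4 - 2 d(C)`. -/
def IsSExtremal {n : ℕ} (C : Submodule (ZMod 2) (Fin n → ZMod 2)) : Prop :=
  IsSinglyEvenSelfDual C ∧
    (minWtSet (shadow C) : ℤ) = ((n / 2 : ℕ) : ℤ) + 4 - 2 * (minWt C : ℤ)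

/-- Two codes are equivalent if one is obtained from the other by permuting coordinates. -/
def CodeEquiv {n : ℕ} (C D : Submodule (ZMod 2) (Fin n → ZMod 2)) : Prop :=
  ∃ σ : Equiv.Perm (Fin n),
    Submodule.map (LinearMap.funLeft (ZMod 2) (ZMod 2) σ) C = D

/-- The neighbor `C₀ ∪ (t + C₀)` of `C` obtained from a shadow vector `t`:
the span of the doubly even subcode together with `t`. -/
def neighborCode {n : ℕ} (C : Submodule (ZMod 2) (Fin n → ZMod 2))
    (t : Fin n → ZMod 2) : Submodule (ZMod 2) (Fin n → ZMod 2) :=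
  Submodule.span (ZMod 2) (evenSub C ∪ {t})

/-- The weight as a sum of coordinate values. -/
lemma aux_wt_eq {n : ℕ} (x : Fin n → ZMod 2) : wt x = ∑ i, (x i).val := by
  unfold wt hammingNorm
  rw [Finset.card_filter]
  apply Finset.sum_congr rfl
  intro i _
  have h : ∀ a : ZMod 2, (if a ≠ 0 then 1 else 0) = a.val := by decide
  exact h (x i)

/-- Weight of a sum. -/
lemma aux_wt_add {n : ℕ} (x y : Fin n → ZMod 2) :
    wt (x + y) + 2 * ∑ i, (x i).val * (y i).val = wt x + wt y := by
  simp only [aux_wt_eq, Finset.mul_sum, ← Finset.sum_add_distrib]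
  apply Finset.sum_congr rfl
  intro i _
  simp only [Pi.add_apply]
  generalize x i = a
  generalize y i = b
  revert a b; decide

lemma aux_dot_even {n : ℕ} (x y : Fin n → ZMod 2) :
    ∑ i, x i * y i = 0 ↔ 2 ∣ ∑ i, (x i).val * (y i).val := by
  rw [← ZMod.natCast_eq_zero_iff]
  push_cast
  simp

lemma aux_dot_self {n : ℕ} (x : Fin n → ZMod 2) :
    ∑ i, x i * x i = 0 ↔ 2 ∣ wt x := by
  rw [aux_wt_eq, ← ZMod.natCast_eq_zero_iff]
  push_cast
  have : ∀ a : ZMod 2, a * a = a := by decide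
  simp [this]

lemma aux_dot_add {n : ℕ} (x y z : Fin n → ZMod 2) :
    ∑ i, (x + y) i * z i = ∑ i, x i * z i + ∑ i, y i * z i := by
  simp [add_mul, Finset.sum_add_distrib]

lemma aux_dot_comm {n : ℕ} (x y : Fin n → ZMod 2) :
    ∑ i, x i * y i = ∑ i, y i * x i := by
  simp [mul_comm]

lemma aux_zmod2 (a : ZMod 2) (h : a ≠ 0) : a = 1 := by
  revert a; decide

lemma aux_add_self {n : ℕ} (x : Fin n → ZMod 2) : x + x = 0 := by
  funext i
  simp only [Pi.add_apply, Pi.zero_apply]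
  generalize x i = a
  revert a; decide

lemma aux_add_cancel {n : ℕ} (x y : Fin n → ZMod 2) : x + (x + y) = y := by
  rw [← add_assoc, aux_add_self, zero_add]

lemma aux_wt_le {n : ℕ} (x : Fin n → ZMod 2) : wt x ≤ n := by
  have := hammingNorm_le_card_fintype (x := x)
  simpa [wt] using this

/-- Sign character. -/
def auxSgn (R : Type) [CommRing R] (a : ZMod 2) : R := if a = 0 then 1 else -1

lemma auxSgn_add (R : Type) [CommRing R] (a b : ZMod 2) :
    auxSgn R (a + b) = auxSgn R a * auxSgn R b := by
  have h : ∀ a b : ZMod 2, (a = 0 ∧ b = 0 ∧ a + b = 0) ∨ (a = 0 ∧ b ≠ 0 ∧ a + b ≠ 0) ∨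
    (a ≠ 0 ∧ b = 0 ∧ a + b ≠ 0) ∨ (a ≠ 0 ∧ b ≠ 0 ∧ a + b = 0) := by decide
  unfold auxSgn
  rcases h a b with ⟨h1, h2, h3⟩ | ⟨h1, h2, h3⟩ | ⟨h1, h2, h3⟩ | ⟨h1, h2, h3⟩ <;>
    simp [h1, h2, h3]

lemma auxSgn_sum (R : Type) [CommRing R] {ι : Type} (s : Finset ι) (f : ι → ZMod 2) :
    auxSgn R (∑ i ∈ s, f i) = ∏ i ∈ s, auxSgn R (f i) := by
  classical
  induction s using Finset.induction_on with
  | empty => simp [auxSgn]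
  | insert a s ha ih => rw [Finset.sum_insert ha, Finset.prod_insert ha, auxSgn_add, ih]

/-- Fourier transform of the weight function. -/
lemma aux_fourier (R : Type) [CommRing R] {n : ℕ} (y : R) (u : Fin n → ZMod 2) :
    ∑ v : Fin n → ZMod 2, auxSgn R (∑ i, u i * v i) * y ^ wt v
      = (1 - y) ^ wt u * (1 + y) ^ (n - wt u) := by
  have h1 : ∀ v : Fin n → ZMod 2, auxSgn R (∑ i, u i * v i) * y ^ wt v
      = ∏ i, (auxSgn R (u i * v i) * y ^ (v i).val) := by
    intro v
    rw [auxSgn_sum, aux_wt_eq, ← Finset.prod_pow_eq_pow_sum, Finset.prod_mul_distrib]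
  simp only [h1]
  have h2 := Fintype.prod_sum (fun (i : Fin n) (a : ZMod 2) => auxSgn R (u i * a) * y ^ a.val)
  rw [← h2]
  have h3 : ∀ i, ∑ a : ZMod 2, auxSgn R (u i * a) * y ^ a.val
      = if u i ≠ 0 then 1 - y else 1 + y := by
    intro i
    have : (Finset.univ : Finset (ZMod 2)) = {0, 1} := by decide
    rw [this, Finset.sum_pair (by decide)]
    have v1 : (1 : ZMod 2).val = 1 := by decide
    by_cases h : u i = 0
    · simp [h, auxSgn, v1]
    · simp [h, auxSgn, v1]; ring
  simp only [h3]
  rw [Finset.prod_ite, Finset.prod_const, Finset.prod_const]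
  have h4 := Finset.card_filter_add_card_filter_not (s := (Finset.univ : Finset (Fin n))) (fun i => u i ≠ 0)
  have h5 : #{i | u i ≠ 0} = wt u := rfl
  rw [h5] at h4 ⊢
  congr 2
  simp at h4 ⊢
  omega

open Classical in
/-- MacWilliams identity for a self-dual code. -/
lemma aux_macwilliams (R : Type) [CommRing R] [IsDomain R] [CharZero R] {n : ℕ}
    (C : Submodule (ZMod 2) (Fin n → ZMod 2)) (hC : IsSelfDual C) (y : R) :
    (#{u | u ∈ C} : R) * ∑ v with v ∈ C, y ^ wt v
      = ∑ u with u ∈ C, (1 - y) ^ wt u * (1 + y) ^ (n - wt u) := by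
  simp only [← aux_fourier]
  rw [Finset.sum_comm]
  have key : ∀ v : Fin n → ZMod 2, ∑ u with u ∈ C, auxSgn R (∑ i, u i * v i)
      = if v ∈ C then (#{u | u ∈ C} : R) else 0 := by
    intro v
    split_ifs with hv
    · have : ∀ u ∈ ({u | u ∈ C} : Finset (Fin n → ZMod 2)), auxSgn R (∑ i, u i * v i) = 1 := by
        intro u hu
        have hu' : u ∈ (C : Set (Fin n → ZMod 2)) := by simpa using hu
        rw [hC] at hu'
        rw [hu' v hv]
        simp [auxSgn]
      rw [Finset.sum_congr rfl this]
      simp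
    · have hv' : v ∉ (C : Set (Fin n → ZMod 2)) := hv
      rw [hC] at hv'
      simp only [dualSet, Set.mem_ofPred_eq, not_forall] at hv'
      obtain ⟨a, ha, hav⟩ := hv'
      have ha' : a ∈ C := ha
      set T := ∑ u with u ∈ C, auxSgn R (∑ i, u i * v i) with hT
      have h1 : T = -T := by
        conv_lhs => rw [hT]
        rw [hT, ← Finset.sum_neg_distrib]
        apply Finset.sum_bij' (fun u _ => a + u) (fun u _ => a + u)
        · intro u hu; simp at hu ⊢; exact C.add_mem ha' hu
        · intro u hu; simp at hu ⊢; exact C.add_mem ha' hu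
        · intro u _; exact aux_add_cancel a u
        · intro u _; exact aux_add_cancel a u
        · intro u _
          rw [aux_dot_add, auxSgn_add, aux_dot_comm a v]
          simp only [auxSgn, hav, if_false]
          split_ifs <;> simp
      exact self_eq_neg.mp h1
  calc _ = ∑ v, (if v ∈ C then (#{u | u ∈ C} : R) else 0) * y ^ wt v := by
        rw [Finset.mul_sum, Finset.sum_filter]
        apply Finset.sum_congr rfl
        intro v _
        split_ifs <;> simp
    _ = _ := by
        apply Finset.sum_congr rfl
        intro v _
        rw [← key, Finset.sum_mul]

open Classical in
lemma aux_card {n : ℕ} (C : Submodule (ZMod 2) (Fin n → ZMod 2)) :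
    #{u | u ∈ C} = 2 ^ Module.finrank (ZMod 2) C := by
  have h := Module.card_eq_pow_finrank (K := ZMod 2) (V := C)
  rw [ZMod.card, Fintype.card_subtype] at h
  convert h

/-- Dimension of a self-dual code. -/
lemma aux_finrank {n : ℕ} (C : Submodule (ZMod 2) (Fin n → ZMod 2)) (hC : IsSelfDual C) :
    2 * Module.finrank (ZMod 2) C = n := by
  classical
  have h := aux_macwilliams ℤ C hC 1
  have h2 : ∑ u with u ∈ C, ((1:ℤ) - 1) ^ wt u * (1 + 1) ^ (n - wt u) = 2 ^ n := by
    rw [Finset.sum_eq_single 0]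
    · simp [wt]
    · intro b _ hb
      have : wt b ≠ 0 := by simpa [wt] using hb
      simp [this]
    · intro h; simp at h
  rw [h2] at h
  simp only [one_pow, Finset.sum_const, nsmul_eq_mul, mul_one] at h
  rw [aux_card] at h
  have h3 : 2 ^ (Module.finrank (ZMod 2) C + Module.finrank (ZMod 2) C) = 2 ^ n := by
    rw [pow_add]; exact_mod_cast h
  have := Nat.pow_right_injective (le_refl 2) h3
  omega

/-- No doubly even self-dual code of length `24 k + 4`. -/
lemma aux_no_doubly_even (k : ℕ) (C : Submodule (ZMod 2) (Fin (24 * k + 4) → ZMod 2))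
    (hC : IsSelfDual C) : ∃ x ∈ C, ¬ 4 ∣ wt x := by
  classical
  by_contra! hcon
  have h := aux_macwilliams ℂ C hC Complex.I
  have hI : Complex.I ^ 4 = 1 := by simp
  have h1 : ∀ v ∈ ({u | u ∈ C} : Finset (Fin (24 * k + 4) → ZMod 2)), Complex.I ^ wt v = 1 := by
    intro v hv
    obtain ⟨m, hm⟩ := hcon v (by simpa using hv)
    rw [hm, pow_mul, hI, one_pow]
  have e1 : (1 - Complex.I) ^ 4 = -4 := by
    have := Complex.I_sq
    linear_combination (Complex.I ^ 2 - 4 * Complex.I + 5) * this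
  have e2 : (1 + Complex.I) ^ 4 = -4 := by
    have := Complex.I_sq
    linear_combination (Complex.I ^ 2 + 4 * Complex.I + 5) * this
  have h2 : ∀ v ∈ ({u | u ∈ C} : Finset (Fin (24 * k + 4) → ZMod 2)),
      (1 - Complex.I) ^ wt v * (1 + Complex.I) ^ (24 * k + 4 - wt v) = - 2 ^ (12 * k + 2) := by
    intro v hv
    obtain ⟨m, hm⟩ := hcon v (by simpa using hv)
    have hle := aux_wt_le v
    have : 24 * k + 4 - wt v = 4 * (6 * k + 1 - m) := by omega
    rw [this, hm, pow_mul, pow_mul, e1, e2, ← pow_add]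
    have : m + (6 * k + 1 - m) = 2 * (3 * k) + 1 := by omega
    rw [this, pow_succ, pow_mul]
    have e : (12 * k + 2) = 4 * (3 * k) + 2 := by ring
    rw [e, pow_add, pow_mul (2 : ℂ)]
    have e3 : (-4 : ℂ) ^ 2 = 2 ^ 4 := by norm_num
    rw [e3]
    ring
  rw [Finset.sum_congr rfl h1, Finset.sum_congr rfl h2] at h
  simp only [Finset.sum_const, nsmul_eq_mul, mul_one] at h
  rw [aux_card] at h
  have h4 := congrArg Complex.re h
  have hp : (0 : ℝ) < 2 ^ Module.finrank (ZMod 2) C := by positivity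
  have hq : (0 : ℝ) < 2 ^ (12 * k + 2) := by positivity
  have h5 : (2 : ℝ) ^ Module.finrank (ZMod 2) C * 2 ^ Module.finrank (ZMod 2) C
      = 2 ^ Module.finrank (ZMod 2) C * (- 2 ^ (12 * k + 2)) := by
    have h6 : (((2 : ℝ) ^ Module.finrank (ZMod 2) C * 2 ^ Module.finrank (ZMod 2) C : ℝ) : ℂ)
      = ((2 ^ Module.finrank (ZMod 2) C * (- 2 ^ (12 * k + 2)) : ℝ) : ℂ) := by
      push_cast at h ⊢
      exact h
    exact_mod_cast h6
  nlinarith [mul_pos hp hp, mul_pos hp hq]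

open Polynomial in
/-- A polynomial with the symmetries of the difference of weight enumerators vanishes. -/
lemma aux_poly_zero (k : ℕ) (P : ℂ[X]) (hdeg : P.natDegree ≤ 20 * k + 2)
    (h0 : X ^ (4 * k + 2) ∣ P) (h1 : (1 - X) ^ (4 * k + 2) * (1 + X) ^ (4 * k + 2) ∣ P)
    (hi : P.comp (C Complex.I * X) = - P) : P = 0 := by
  by_contra hP
  have hII : (C Complex.I : ℂ[X]) * C Complex.I = -1 := by
    rw [← C_mul, Complex.I_mul_I]; simp
  have hA : (1 - X ^ 2 : ℂ[X]) ^ (4 * k + 2) ∣ P := by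
    have : (1 - X ^ 2 : ℂ[X]) = (1 - X) * (1 + X) := by ring
    rw [this, mul_pow]; exact h1
  have hB : (1 + X ^ 2 : ℂ[X]) ^ (4 * k + 2) ∣ P := by
    obtain ⟨Q, hQ⟩ := hA
    rw [hQ] at hi
    simp only [mul_comp, pow_comp, sub_comp, one_comp, X_comp] at hi
    have e : (1 - (C Complex.I * X) ^ 2 : ℂ[X]) = 1 + X ^ 2 := by
      linear_combination (- X ^ 2) * hII
    rw [e] at hi
    rw [hQ]
    exact ⟨- Q.comp (C Complex.I * X), by rw [mul_neg, hi, neg_neg]⟩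
  have c2 : ((C (1/2 : ℂ)) : ℂ[X]) * 2 = 1 := by
    have : (2 : ℂ[X]) = C 2 := rfl
    rw [this, ← C_mul]; norm_num
  have hAB : IsCoprime (1 - X ^ 2 : ℂ[X]) (1 + X ^ 2) :=
    ⟨C (1/2), C (1/2), by linear_combination c2⟩
  have hXA : IsCoprime (X : ℂ[X]) ((1 - X ^ 2) * (1 + X ^ 2)) :=
    ⟨X ^ 3, 1, by ring⟩
  have d1 := (hAB.pow (m := 4 * k + 2) (n := 4 * k + 2)).mul_dvd hA hB
  rw [← mul_pow] at d1
  have d2 := (hXA.pow (m := 4 * k + 2) (n := 4 * k + 2)).mul_dvd h0 d1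
  rw [← mul_pow] at d2
  have hle := Polynomial.natDegree_le_of_dvd d2 hP
  have hn : (X * ((1 - X ^ 2) * (1 + X ^ 2)) : ℂ[X]).natDegree = 5 := by
    have : (X * ((1 - X ^ 2) * (1 + X ^ 2)) : ℂ[X]) = X - X ^ 5 := by ring
    rw [this]; compute_degree!
  rw [natDegree_pow, hn] at hle
  omega

open Polynomial Classical in
/-- Two self-dual codes whose symmetric differences have the weights as in the theorem
have the same number of words of each weight outside of their intersection. -/
lemma aux_exists (k : ℕ) (A B : Submodule (ZMod 2) (Fin (24 * k + 4) → ZMod 2))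
    (hA : IsSelfDual A) (hB : IsSelfDual B)
    (hAB : ∀ x, (x ∈ A ∧ x ∉ B) ∨ (x ∈ B ∧ x ∉ A) →
      wt x % 4 = 2 ∧ 4 * k + 2 ≤ wt x ∧ wt x ≤ 20 * k + 2)
    (hex : ∃ x ∈ A, x ∉ B ∧ wt x = 4 * k + 2) :
    ∃ x ∈ B, x ∉ A ∧ wt x = 4 * k + 2 := by
  set sA : Finset (Fin (24 * k + 4) → ZMod 2) := {u | u ∈ A} with hsA
  set sB : Finset (Fin (24 * k + 4) → ZMod 2) := {u | u ∈ B} with hsB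
  have mA := aux_macwilliams ℂ[X] A hA X
  have mB := aux_macwilliams ℂ[X] B hB X
  rw [← hsA] at mA
  rw [← hsB] at mB
  have cA : #sA = 2 ^ (12 * k + 2) := by
    rw [hsA, aux_card]; congr 1; have := aux_finrank A hA; omega
  have cB : #sB = 2 ^ (12 * k + 2) := by
    rw [hsB, aux_card]; congr 1; have := aux_finrank B hB; omega
  rw [cA] at mA
  rw [cB] at mB
  set P : ℂ[X] := ∑ v ∈ sA \ sB, X ^ wt v - ∑ v ∈ sB \ sA, X ^ wt v with hP
  have hP' : P = ∑ v ∈ sA, X ^ wt v - ∑ v ∈ sB, X ^ wt v := by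
    rw [hP, Finset.sum_sdiff_sub_sum_sdiff]
  have w1 : ∀ v ∈ sA \ sB, wt v % 4 = 2 ∧ 4 * k + 2 ≤ wt v ∧ wt v ≤ 20 * k + 2 := by
    intro v hv
    apply hAB; left; simpa [hsA, hsB] using hv
  have w2 : ∀ v ∈ sB \ sA, wt v % 4 = 2 ∧ 4 * k + 2 ≤ wt v ∧ wt v ≤ 20 * k + 2 := by
    intro v hv
    apply hAB; right; simpa [hsA, hsB] using hv
  have hzero : P = 0 := by
    apply aux_poly_zero k
    · apply (natDegree_sub_le _ _).trans
      apply max_le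
      · apply natDegree_sum_le_of_forall_le
        intro v hv; rw [natDegree_X_pow]; exact (w1 v hv).2.2
      · apply natDegree_sum_le_of_forall_le
        intro v hv; rw [natDegree_X_pow]; exact (w2 v hv).2.2
    · apply dvd_sub
      · exact Finset.dvd_sum fun v hv => pow_dvd_pow _ (w1 v hv).2.1
      · exact Finset.dvd_sum fun v hv => pow_dvd_pow _ (w2 v hv).2.1
    · have hm : ((2 ^ (12 * k + 2) : ℕ) : ℂ[X]) * P =
          ∑ u ∈ sA \ sB, (1 - X) ^ wt u * (1 + X) ^ (24 * k + 4 - wt u)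
          - ∑ u ∈ sB \ sA, (1 - X) ^ wt u * (1 + X) ^ (24 * k + 4 - wt u) := by
        rw [Finset.sum_sdiff_sub_sum_sdiff, hP', mul_sub, mA, mB]
      have hu : IsUnit ((2 ^ (12 * k + 2) : ℕ) : ℂ[X]) := by
        have : ((2 ^ (12 * k + 2) : ℕ) : ℂ[X]) = C ((2 ^ (12 * k + 2) : ℕ) : ℂ) := (C_eq_natCast _).symm
        rw [this, isUnit_C]
        simp
      rw [← hu.dvd_mul_left, hm]
      apply dvd_sub
      · refine Finset.dvd_sum fun v hv => mul_dvd_mul (pow_dvd_pow _ ?_) (pow_dvd_pow _ ?_) <;>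
        have := w1 v hv <;> omega
      · refine Finset.dvd_sum fun v hv => mul_dvd_mul (pow_dvd_pow _ ?_) (pow_dvd_pow _ ?_) <;>
        have := w2 v hv <;> omega
    · have e : ∀ w : ℕ, w % 4 = 2 → ((X : ℂ[X]) ^ w).comp (C Complex.I * X) = - X ^ w := by
        intro w hw
        rw [X_pow_comp, mul_pow, ← C_pow]
        have : Complex.I ^ w = -1 := by
          rw [← Nat.div_add_mod w 4, hw, pow_add, pow_mul]; simp
        rw [this]; simp
      rw [hP, sub_comp, Polynomial.sum_comp, Polynomial.sum_comp,
        Finset.sum_congr rfl fun v hv => e _ (w1 v hv).1,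
        Finset.sum_congr rfl fun v hv => e _ (w2 v hv).1]
      simp only [Finset.sum_neg_distrib]
      ring
  have hc := congrArg (fun p => coeff p (4 * k + 2)) hzero
  simp only [hP, coeff_sub, finsetSum_coeff, coeff_X_pow, coeff_zero, Finset.sum_boole,
    sub_eq_zero] at hc
  have hc' := Nat.cast_injective hc
  obtain ⟨x, hxA, hxB, hx⟩ := hex
  have hpos : 0 < #{v ∈ sB \ sA | 4 * k + 2 = wt v} := by
    rw [← hc', Finset.card_pos]
    exact ⟨x, by simp [hsA, hsB, hxA, hxB, hx]⟩
  obtain ⟨z, hz⟩ := Finset.card_pos.mp hpos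
  simp only [hsA, hsB, Finset.mem_filter, Finset.mem_sdiff, Finset.mem_univ, true_and] at hz
  exact ⟨z, hz.1.1, hz.1.2, hz.2.symm⟩

lemma aux_le_of_minWtSet {n : ℕ} {S : Set (Fin n → ZMod 2)} {d : ℕ} (h : minWtSet S = d)
    {x : Fin n → ZMod 2} (hx : x ∈ S) (h0 : x ≠ 0) : d ≤ wt x := by
  rw [← h]
  exact Nat.sInf_le ⟨x, hx, h0, rfl⟩

lemma aux_mem_of_minWtSet {n : ℕ} {S : Set (Fin n → ZMod 2)} {d : ℕ} (h : minWtSet S = d)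
    (hd : d ≠ 0) : ∃ x ∈ S, x ≠ 0 ∧ wt x = d := by
  have hne : {w | ∃ x ∈ S, x ≠ 0 ∧ wt x = w}.Nonempty := by
    apply Nat.nonempty_of_sInf_eq_succ (k := d - 1)
    have : minWtSet S = d - 1 + 1 := by omega
    exact this
  have := Nat.sInf_mem hne
  have h' : sInf {w | ∃ x ∈ S, x ≠ 0 ∧ wt x = w} = d := h
  rw [h'] at this
  exact this

lemma aux_minWtSet_eq {n : ℕ} {S : Set (Fin n → ZMod 2)} {d : ℕ}
    (h1 : ∀ x ∈ S, x ≠ 0 → d ≤ wt x) (h2 : ∃ x ∈ S, x ≠ 0 ∧ wt x = d) : minWtSet S = d := by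
  apply le_antisymm
  · exact Nat.sInf_le h2
  · apply le_csInf ⟨d, h2⟩
    rintro w ⟨x, hx, h0, rfl⟩
    exact h1 x hx h0

/-- Weights mod 4 are additive on orthogonal vectors. -/
lemma aux_wt_add_mod {n : ℕ} {x y : Fin n → ZMod 2} (h : ∑ i, x i * y i = 0) :
    (wt (x + y)) % 4 = (wt x + wt y) % 4 := by
  have h1 := aux_wt_add x y
  obtain ⟨m, hm⟩ := (aux_dot_even x y).mp h
  omega

lemma aux_orth {n : ℕ} {C : Submodule (ZMod 2) (Fin n → ZMod 2)} (hC : IsSelfDual C)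
    {x y : Fin n → ZMod 2} (hx : x ∈ C) (hy : y ∈ C) : ∑ i, x i * y i = 0 := by
  have hx' : x ∈ (C : Set (Fin n → ZMod 2)) := hx
  rw [hC] at hx'
  exact hx' y hy

lemma aux_mem_of_orth {n : ℕ} {C : Submodule (ZMod 2) (Fin n → ZMod 2)} (hC : IsSelfDual C)
    {x : Fin n → ZMod 2} (h : ∀ y ∈ C, ∑ i, x i * y i = 0) : x ∈ C := by
  have hx' : x ∈ (C : Set (Fin n → ZMod 2)) := by
    rw [hC]; exact h
  exact hx'

/-- A vector of the shadow is not orthogonal to any word of `C` outside of `C₀`. -/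
lemma aux_shadow_dot {n : ℕ} {C : Submodule (ZMod 2) (Fin n → ZMod 2)} (hC : IsSelfDual C)
    {z a : Fin n → ZMod 2} (hz : z ∈ dualSet (evenSub C)) (hzC : z ∉ C) (ha : a ∈ C)
    (ha4 : ¬ 4 ∣ wt a) : ∑ i, z i * a i = 1 := by
  apply aux_zmod2
  intro h0
  apply hzC
  apply aux_mem_of_orth hC
  intro y hy
  by_cases hy4 : 4 ∣ wt y
  · exact hz y ⟨hy, hy4⟩
  · have e1 := (aux_dot_self a).mp (aux_orth hC ha ha)
    have e2 := (aux_dot_self y).mp (aux_orth hC hy hy)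
    have h3 := aux_wt_add_mod (aux_orth hC ha hy)
    have h4 := hz (a + y) ⟨C.add_mem ha hy, by omega⟩
    rw [aux_dot_comm, aux_dot_add, aux_dot_comm a z, aux_dot_comm y z, h0, zero_add] at h4
    exact h4

/-- The doubly even subcode as a submodule. -/
def auxEven {n : ℕ} (C : Submodule (ZMod 2) (Fin n → ZMod 2)) (hC : IsSelfDual C) :
    Submodule (ZMod 2) (Fin n → ZMod 2) where
  carrier := evenSub C
  zero_mem' := ⟨C.zero_mem, by simp [wt]⟩
  add_mem' := by
    rintro a b ⟨ha, ha4⟩ ⟨hb, hb4⟩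
    refine ⟨C.add_mem ha hb, ?_⟩
    have := aux_wt_add_mod (aux_orth hC ha hb)
    omega
  smul_mem' := by
    rintro c x ⟨hx, hx4⟩
    refine ⟨C.smul_mem c hx, ?_⟩
    by_cases h : c = 0
    · simp [h, wt]
    · rw [aux_zmod2 c h, one_smul]; exact hx4

lemma aux_mem_neighbor {n : ℕ} {C : Submodule (ZMod 2) (Fin n → ZMod 2)} (hC : IsSelfDual C)
    (t x : Fin n → ZMod 2) :
    x ∈ neighborCode C t ↔ x ∈ evenSub C ∨ t + x ∈ evenSub C := by
  have hspan : Submodule.span (ZMod 2) (evenSub C) = auxEven C hC :=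
    Submodule.span_eq (auxEven C hC)
  unfold neighborCode
  rw [Submodule.span_union, Submodule.mem_sup]
  constructor
  · rintro ⟨y, hy, z, hz, rfl⟩
    rw [hspan] at hy
    obtain ⟨c, rfl⟩ := Submodule.mem_span_singleton.mp hz
    by_cases h : c = 0
    · left
      rw [h, zero_smul, add_zero]
      exact hy
    · right
      rw [aux_zmod2 c h, one_smul, add_comm y t, aux_add_cancel]
      exact hy
  · rintro (h | h)
    · exact ⟨x, Submodule.subset_span h, 0, Submodule.zero_mem _, by simp⟩
    · refine ⟨t + x, Submodule.subset_span h, t, Submodule.mem_span_singleton_self t, ?_⟩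
      rw [add_comm, aux_add_cancel]

/-- Proposition 2.1(i): the neighbors `N₁(C) = C₀ ∪ C₁` and `N₃(C) = C₀ ∪ C₃` of an
s-extremal singly even self-dual `[24k+4, 12k+2, 4k+2]` code (obtained by adjoining a
shadow vector `t` to the doubly even subcode) are again s-extremal singly even self-dual
`[24k+4, 12k+2, 4k+2]` codes. -/
theorem sExtremal_neighbor_24k4 (k : ℕ)
    (C : Submodule (ZMod 2) (Fin (24 * k + 4) → ZMod 2))
    (hse : IsSinglyEvenSelfDual C)
    (hdim : Module.finrank (ZMod 2) C = 12 * k + 2)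
    (hd : minWt C = 4 * k + 2)
    (hshadow : minWtSet (shadow C) = 4 * k + 2)
    (t : Fin (24 * k + 4) → ZMod 2) (ht : t ∈ shadow C) :
    IsSinglyEvenSelfDual (neighborCode C t) ∧
    Module.finrank (ZMod 2) (neighborCode C t) = 12 * k + 2 ∧
    minWt (neighborCode C t) = 4 * k + 2 ∧
    minWtSet (shadow (neighborCode C t)) = 4 * k + 2 := by
  obtain ⟨hC, a, ha, ha4⟩ := hse
  obtain ⟨htd, htCset⟩ := ht
  have htC : t ∉ C := htCset
  -- the all-ones vector
  have hone : (fun _ => 1 : Fin (24 * k + 4) → ZMod 2) ∈ evenSub C := by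
    constructor
    · apply aux_mem_of_orth hC
      intro y hy
      have h1 := aux_orth hC hy hy
      have : ∀ a : ZMod 2, a * a = a := by decide
      simpa [this] using h1
    · have h1 : (1 : ZMod 2).val = 1 := by decide
      rw [aux_wt_eq]
      simp [h1]; omega
  -- every vector of the dual of `C₀` has even weight
  have heven : ∀ x ∈ dualSet (evenSub C), 2 ∣ wt x := by
    intro x hx
    have h1 := hx _ hone
    have : ∀ a : ZMod 2, a * a = a := by decide
    rw [← aux_dot_self]
    simpa [this] using h1
  have hcompl : ∀ x : Fin (24 * k + 4) → ZMod 2, wt (x + fun _ => 1) + wt x = 24 * k + 4 := by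
    intro x
    have h := aux_wt_add x (fun _ => 1)
    have h1 : (1 : ZMod 2).val = 1 := by decide
    simp only [h1, mul_one, ← aux_wt_eq] at h
    have h2 : wt (fun _ => 1 : Fin (24 * k + 4) → ZMod 2) = 24 * k + 4 := by
      rw [aux_wt_eq]; simp [h1]
    omega
  have hCsub : ∀ x ∈ C, x ∈ dualSet (evenSub C) := fun x hx y hy => aux_orth hC hx hy.1
  have hlow : ∀ x ∈ dualSet (evenSub C), x ≠ 0 → 4 * k + 2 ≤ wt x := by
    intro x hx h0
    by_cases hxC : x ∈ C
    · exact aux_le_of_minWtSet hd hxC h0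
    · exact aux_le_of_minWtSet hshadow ⟨hx, hxC⟩ h0
  have hhigh : ∀ x ∈ dualSet (evenSub C), x ≠ (fun _ => 1) → wt x ≤ 20 * k + 2 := by
    intro x hx h1
    have hc := hcompl x
    have hm : (x + fun _ => 1) ∈ dualSet (evenSub C) := by
      intro y hy
      rw [aux_dot_add, hx y hy, hCsub _ hone.1 y hy, add_zero]
    have hne : (x + fun _ => 1) ≠ 0 := by
      intro h
      apply h1
      have h2 := aux_add_cancel (fun _ => 1) x
      rw [add_comm _ x, h, add_zero] at h2
      exact h2.symm
    have := hlow _ hm hne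
    omega
  set N := neighborCode C t with hN
  have hmem : ∀ x, x ∈ N ↔ x ∈ evenSub C ∨ t + x ∈ evenSub C := aux_mem_neighbor hC t
  have htt : ∑ i, t i * t i = 0 := (aux_dot_self t).mpr (heven t htd)
  have hNsub : ∀ x ∈ N, x ∈ dualSet (evenSub C) := by
    intro x hx
    rcases (hmem x).mp hx with h | h
    · exact hCsub x h.1
    · intro y hy
      rw [← aux_add_cancel t x, aux_dot_add, htd y hy, aux_orth hC h.1 hy.1, add_zero]
  have hNt : ∀ x ∈ N, ∑ i, x i * t i = 0 := by
    intro x hx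
    rcases (hmem x).mp hx with h | h
    · rw [aux_dot_comm]; exact htd x h
    · rw [← aux_add_cancel t x, aux_dot_add, htt, aux_dot_comm (t + x) t, htd _ h, add_zero]
  -- self-duality
  have hNsd : IsSelfDual N := by
    ext z
    constructor
    · intro hz y hy
      rcases (hmem y).mp hy with h | h
      · exact hNsub z hz y h
      · rw [← aux_add_cancel t y, aux_dot_comm, aux_dot_add, aux_dot_comm t z,
          aux_dot_comm (t + y) z, hNt z hz, hNsub z hz _ h, add_zero]
    · intro hz
      have hzd : z ∈ dualSet (evenSub C) := fun y hy => hz y ((hmem y).mpr (Or.inl hy))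
      have htN : t ∈ N := by
        rw [hmem, aux_add_self]
        exact Or.inr ⟨C.zero_mem, by simp [wt]⟩
      have hzt : ∑ i, z i * t i = 0 := hz t htN
      by_cases hzC : z ∈ C
      · apply (hmem z).mpr
        left
        refine ⟨hzC, ?_⟩
        by_contra h4
        have := aux_shadow_dot hC htd htC hzC h4
        rw [aux_dot_comm, hzt] at this
        exact zero_ne_one this
      · have hsum : t + z ∈ C := by
          have hd2 : t + z ∈ dualSet (evenSub C) := by
            intro y hy
            rw [aux_dot_add, htd y hy, hzd y hy, add_zero]
          by_contra hcon
          have h1 := aux_shadow_dot hC hd2 hcon ha ha4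
          rw [aux_dot_add, aux_shadow_dot hC htd htC ha ha4,
            aux_shadow_dot hC hzd hzC ha ha4] at h1
          revert h1; decide
        apply (hmem z).mpr
        right
        refine ⟨hsum, ?_⟩
        by_contra h4
        have := aux_shadow_dot hC htd htC hsum h4
        rw [aux_dot_comm, aux_dot_add, htt, hzt] at this
        revert this; decide
  obtain ⟨b, hb, hb4⟩ := aux_no_doubly_even k N hNsd
  -- the weight of `t` is 2 mod 4
  have ht2 : wt t % 4 = 2 := by
    have he := heven t htd
    by_contra hcon
    apply hb4
    rcases (hmem b).mp hb with h | h
    · exact h.2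
    · have h1 := aux_wt_add_mod (htd _ h)
      rw [aux_add_cancel] at h1
      have := h.2
      omega
  have hN2 : ∀ x ∈ N, x ∉ C → wt x % 4 = 2 := by
    intro x hx hxC
    rcases (hmem x).mp hx with h | h
    · exact absurd h.1 hxC
    · have h1 := aux_wt_add_mod (htd _ h)
      rw [aux_add_cancel] at h1
      have := h.2
      omega
  have hC2 : ∀ x ∈ C, x ∉ N → wt x % 4 = 2 := by
    intro x hx hxN
    have h1 := heven x (hCsub x hx)
    have h2 : ¬ 4 ∣ wt x := fun h => hxN ((hmem x).mpr (Or.inl ⟨hx, h⟩))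
    omega
  have hNC : ∀ x ∈ N, x ∈ C → x ∈ evenSub C := by
    intro x hx hxC
    rcases (hmem x).mp hx with h | h
    · exact h
    · exfalso
      apply htC
      have := C.add_mem h.1 hxC
      rwa [add_assoc, aux_add_self, add_zero] at this
  have hevN : evenSub N = evenSub C := by
    ext x
    constructor
    · rintro ⟨hx, h4⟩
      by_cases hxC : x ∈ C
      · exact ⟨hxC, h4⟩
      · have := hN2 x hx hxC
        omega
    · intro hx
      exact ⟨(hmem x).mpr (Or.inl hx), hx.2⟩
  obtain ⟨c, hcC, hc0, hcw⟩ := aux_mem_of_minWtSet hd (by omega)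
  have hcN : c ∉ N := by
    intro h
    have := (hNC c h hcC).2
    omega
  have hall : ∀ x, (x ∈ C ∧ x ∉ N) ∨ (x ∈ N ∧ x ∉ C) →
      wt x % 4 = 2 ∧ 4 * k + 2 ≤ wt x ∧ wt x ≤ 20 * k + 2 := by
    intro x hx
    have h0N : (0 : Fin (24 * k + 4) → ZMod 2) ∈ N := N.zero_mem
    have h0C : (0 : Fin (24 * k + 4) → ZMod 2) ∈ C := C.zero_mem
    have h1N : (fun _ => 1 : Fin (24 * k + 4) → ZMod 2) ∈ N := (hmem _).mpr (Or.inl hone)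
    have h1C := hone.1
    rcases hx with ⟨h1, h2⟩ | ⟨h1, h2⟩
    · exact ⟨hC2 x h1 h2, hlow x (hCsub x h1) (fun h => h2 (h ▸ h0N)),
        hhigh x (hCsub x h1) (fun h => h2 (h ▸ h1N))⟩
    · exact ⟨hN2 x h1 h2, hlow x (hNsub x h1) (fun h => h2 (h ▸ h0C)),
        hhigh x (hNsub x h1) (fun h => h2 (h ▸ h1C))⟩
  obtain ⟨e, heN, heC, hew⟩ := aux_exists k C N hC hNsd hall ⟨c, hcC, hcN, hcw⟩
  refine ⟨⟨hNsd, b, hb, hb4⟩, ?_, ?_, ?_⟩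
  · have := aux_finrank N hNsd
    omega
  · apply aux_minWtSet_eq
    · intro x hx h0
      exact hlow x (hNsub x hx) h0
    · exact ⟨e, heN, fun h => heC (h ▸ C.zero_mem), hew⟩
  · apply aux_minWtSet_eq
    · intro x hx h0
      have h1 := hx.1
      rw [hevN] at h1
      exact hlow x h1 h0
    · refine ⟨c, ⟨?_, hcN⟩, hc0, hcw⟩
      rw [hevN]
      exact hCsub c hcC
end

section
/- There exist at least 92 pairwise inequivalent s-extremal singly even self-dual [56,28,10] codes; that is, there exist at least 92 pairwise inequivalent singly even self-dual codes of length 56 with minimum weight 10 whose shadows have minimum weight 12. -/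
open Finset

namespace SX

/-! ### Part 1: neighbours of a doubly even self-dual code -/

variable {n : ℕ}

theorem z2 (a : ZMod 2) : a = 0 ∨ a = 1 := by revert a; decide

/-- The standard inner product. -/
def ip (x y : Fin n → ZMod 2) : ZMod 2 := ∑ i, x i * y i

theorem ip_comm (x y : Fin n → ZMod 2) : ip x y = ip y x := by
  simp [ip, mul_comm]

theorem ip_add (x y z : Fin n → ZMod 2) : ip x (y + z) = ip x y + ip x z := by
  simp [ip, mul_add, Finset.sum_add_distrib]

theorem add_ip (x y z : Fin n → ZMod 2) : ip (x + y) z = ip x z + ip y z := by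
  simp [ip, add_mul, Finset.sum_add_distrib]

theorem ip_smul (c : ZMod 2) (x y : Fin n → ZMod 2) : ip x (c • y) = c * ip x y := by
  simp [ip, Finset.mul_sum, mul_left_comm]

theorem smul_ip (c : ZMod 2) (x y : Fin n → ZMod 2) : ip (c • x) y = c * ip x y := by
  simp [ip, Finset.mul_sum, mul_assoc]

theorem wt_eq_sum (x : Fin n → ZMod 2) : wt x = ∑ i, if x i ≠ 0 then 1 else 0 := by
  rw [wt, hammingNorm, Finset.card_filter]

theorem wt_add (x y : Fin n → ZMod 2) :
    ∃ k : ℕ, wt (x + y) + 2 * k = wt x + wt y ∧ ip x y = (k : ZMod 2) := by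
  refine ⟨∑ i, if x i ≠ 0 ∧ y i ≠ 0 then 1 else 0, ?_, ?_⟩
  · rw [wt_eq_sum, wt_eq_sum, wt_eq_sum, Finset.mul_sum, ← Finset.sum_add_distrib,
      ← Finset.sum_add_distrib]
    refine Finset.sum_congr rfl fun i _ => ?_
    simp only [Pi.add_apply]
    rcases z2 (x i) with h | h <;> rcases z2 (y i) with h' | h' <;> simp [h, h'] <;> decide
  · rw [ip, Nat.cast_sum]
    refine Finset.sum_congr rfl fun i _ => ?_
    rcases z2 (x i) with h | h <;> rcases z2 (y i) with h' | h' <;> simp [h, h']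

theorem wt_add_even {x y : Fin n → ZMod 2} (h : ip x y = 0) (hx : 4 ∣ wt x) :
    wt (x + y) % 4 = wt y % 4 := by
  obtain ⟨k, h1, h2⟩ := wt_add x y
  rw [h, eq_comm, ZMod.natCast_eq_zero_iff] at h2
  omega

theorem wt_add_odd {x y : Fin n → ZMod 2} (h : ip x y = 1) (hx : 4 ∣ wt x) :
    wt (x + y) % 4 = (wt y + 2) % 4 := by
  obtain ⟨k, h1, h2⟩ := wt_add x y
  have h3 : ((k + 1 : ℕ) : ZMod 2) = 0 := by rw [Nat.cast_add, ← h2, h]; decide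
  rw [ZMod.natCast_eq_zero_iff] at h3
  omega

theorem ip_self (x : Fin n → ZMod 2) : ip x x = (wt x : ZMod 2) := by
  rw [wt_eq_sum, ip, Nat.cast_sum]
  refine Finset.sum_congr rfl fun i _ => ?_
  rcases z2 (x i) with h | h <;> simp [h]

theorem add_self (x : Fin n → ZMod 2) : x + x = 0 := by
  funext i
  exact CharTwo.add_self_eq_zero _

theorem wt_zero : wt (0 : Fin n → ZMod 2) = 0 := by simp [wt]

/-- The properties of the doubly even code `D`. -/
structure DE (D : Submodule (ZMod 2) (Fin n → ZMod 2)) : Prop where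
  orth : ∀ x ∈ D, ∀ y ∈ D, ip x y = 0
  dual : ∀ x, (∀ y ∈ D, ip x y = 0) → x ∈ D
  even : ∀ x ∈ D, 4 ∣ wt x
  low : ∀ x ∈ D, x ≠ 0 → 12 ≤ wt x

/-- A coset leader of weight 10 whose coset has minimum weight 10. -/
structure CL (D : Submodule (ZMod 2) (Fin n → ZMod 2)) (t : Fin n → ZMod 2) : Prop where
  ten : wt t = 10
  min : ∀ x, x + t ∈ D → 10 ≤ wt x

/-- The singly even neighbour. -/
def nb (D : Submodule (ZMod 2) (Fin n → ZMod 2)) (t : Fin n → ZMod 2) :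
    Submodule (ZMod 2) (Fin n → ZMod 2) where
  carrier := {x | (x ∈ D ∨ x + t ∈ D) ∧ ip x t = 0}
  zero_mem' := ⟨Or.inl D.zero_mem, by simp [ip]⟩
  add_mem' := by
    rintro a b ⟨ha, ha'⟩ ⟨hb, hb'⟩
    refine ⟨?_, by rw [add_ip, ha', hb', add_zero]⟩
    rcases ha with ha | ha <;> rcases hb with hb | hb
    · exact Or.inl (D.add_mem ha hb)
    · right; rw [add_assoc]; exact D.add_mem ha hb
    · right; rw [add_right_comm]; exact D.add_mem ha hb
    · left
      have := D.add_mem ha hb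
      rwa [add_add_add_comm, add_self, add_zero] at this
  smul_mem' := by
    rintro c x ⟨hx, hx'⟩
    rcases z2 c with rfl | rfl
    · simp [ip]
    · simpa using ⟨hx, hx'⟩

theorem mem_nb {D : Submodule (ZMod 2) (Fin n → ZMod 2)} {t x : Fin n → ZMod 2} :
    x ∈ nb D t ↔ (x ∈ D ∨ x + t ∈ D) ∧ ip x t = 0 := Iff.rfl

section
variable {D : Submodule (ZMod 2) (Fin n → ZMod 2)} {t : Fin n → ZMod 2}

theorem t_ip (ht : CL D t) : ip t t = 0 := by
  rw [ip_self, ht.ten]; decide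

theorem t_mem (ht : CL D t) : t ∈ nb D t :=
  ⟨Or.inr (by rw [add_self]; exact D.zero_mem), t_ip ht⟩

theorem t_not_mem (hD : DE D) (ht : CL D t) : t ∉ D := by
  intro h
  have := hD.even t h
  rw [ht.ten] at this
  omega

theorem exists_d (hD : DE D) (ht : CL D t) : ∃ d ∈ D, ip d t = 1 := by
  by_contra hc
  push Not at hc
  refine t_not_mem hD ht (hD.dual t fun y hy => ?_)
  rw [ip_comm]
  exact (z2 _).resolve_right (hc y hy)

/-- Weights in the coset. -/
theorem coset_wt (hD : DE D) (ht : CL D t) {x : Fin n → ZMod 2} (hx : x + t ∈ D) :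
    wt x % 4 = if ip x t = 0 then 2 else 0 := by
  have hx' : x = (x + t) + t := by rw [add_assoc, add_self, add_zero]
  have hip : ip (x + t) t = ip x t := by rw [add_ip, t_ip ht, add_zero]
  rcases z2 (ip x t) with h | h
  · rw [if_pos h]
    conv_lhs => rw [hx']
    rw [wt_add_even (by rw [hip, h]) (hD.even _ hx), ht.ten]
  · rw [if_neg (by rw [h]; decide)]
    conv_lhs => rw [hx']
    rw [wt_add_odd (by rw [hip, h]) (hD.even _ hx), ht.ten]

theorem orth_of (hD : DE D) (ht : CL D t) {x : Fin n → ZMod 2}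
    (h : ∀ y ∈ D, ip y t = 0 → ip x y = 0) : x ∈ D ∨ x + t ∈ D := by
  obtain ⟨d, hd, hdt⟩ := exists_d hD ht
  have key : x + (ip x d) • t ∈ D := by
    refine hD.dual _ fun y hy => ?_
    rw [add_ip, smul_ip, ip_comm t y]
    rcases z2 (ip y t) with hy0 | hy1
    · rw [h y hy hy0, hy0, mul_zero, add_zero]
    · have := h (y + d) (D.add_mem hy hd) (by rw [add_ip, hy1, hdt]; decide)
      rw [ip_add] at this
      rw [hy1, mul_one, this]
  rcases z2 (ip x d) with h0 | h1
  · left; rwa [h0, zero_smul, add_zero] at key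
  · right; rwa [h1, one_smul] at key

theorem nb_evenSub (hD : DE D) (ht : CL D t) :
    evenSub (nb D t) = {x | x ∈ D ∧ ip x t = 0} := by
  ext x
  constructor
  · rintro ⟨⟨h | h, h0⟩, h4⟩
    · exact ⟨h, h0⟩
    · have := coset_wt hD ht h
      rw [if_pos h0] at this
      omega
  · rintro ⟨h, h0⟩
    exact ⟨⟨Or.inl h, h0⟩, hD.even x h⟩

theorem nb_selfDual (hD : DE D) (ht : CL D t) : IsSelfDual (nb D t) := by
  apply Set.Subset.antisymm
  · rintro x ⟨hx, hx0⟩ y ⟨hy, hy0⟩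
    change ip x y = 0
    have e : ∀ a b, ip b t = 0 → ip a t = 0 → (ip (a + t) b = ip a b) ∧
        (ip a (b + t) = ip a b) ∧ ip (a + t) (b + t) = ip a b := by
      intro a b hb ha
      have hb' : ip t b = 0 := by rw [ip_comm, hb]
      simp [add_ip, ip_add, ha, hb', t_ip ht]
    obtain ⟨e1, e2, e3⟩ := e x y hy0 hx0
    rcases hx with hx | hx <;> rcases hy with hy | hy
    · exact hD.orth x hx y hy
    · rw [← e2]; exact hD.orth _ hx _ hy
    · rw [← e1]; exact hD.orth _ hx _ hy
    · rw [← e3]; exact hD.orth _ hx _ hy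
  · intro x hx
    have hx : ∀ y ∈ nb D t, ip x y = 0 := hx
    exact ⟨orth_of hD ht fun y hy h0 => hx y ⟨Or.inl hy, h0⟩, hx t (t_mem ht)⟩

theorem nb_shadow (hD : DE D) (ht : CL D t) :
    shadow (nb D t) = {x | (x ∈ D ∨ x + t ∈ D) ∧ ip x t = 1} := by
  rw [_root_.shadow, nb_evenSub hD ht]
  ext x
  constructor
  · rintro ⟨h, h1⟩
    have h' := orth_of hD ht (x := x) fun y hy h0 => h y ⟨hy, h0⟩
    refine ⟨h', (z2 _).resolve_left fun h0 => h1 ⟨h', h0⟩⟩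
  · rintro ⟨h, h1⟩
    refine ⟨?_, fun h2 => ?_⟩
    · rintro y ⟨hy, hy0⟩
      change ip x y = 0
      rcases h with h | h
      · exact hD.orth _ h _ hy
      · have := hD.orth _ h _ hy
        rwa [add_ip, ip_comm t, hy0, add_zero] at this
    · have := h2.2
      rw [h1] at this
      exact absurd this (by decide)

theorem minWtSet_eq {S : Set (Fin n → ZMod 2)} {w : ℕ} (h1 : ∃ x ∈ S, x ≠ 0 ∧ wt x = w)
    (h2 : ∀ x ∈ S, x ≠ 0 → w ≤ wt x) : minWtSet S = w := by
  apply le_antisymm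
  · exact Nat.sInf_le h1
  · obtain ⟨x, hx, h0, hw⟩ := Nat.sInf_mem (s := {w | ∃ x ∈ S, x ≠ 0 ∧ wt x = w}) ⟨w, h1⟩
    rw [minWtSet, ← hw]
    exact h2 x hx h0

theorem nb_minWt (hD : DE D) (ht : CL D t) : minWt (nb D t) = 10 := by
  refine minWtSet_eq ⟨t, t_mem ht, ?_, ht.ten⟩ ?_
  · rintro rfl
    have := ht.ten
    rw [wt_zero] at this
    omega
  · rintro x ⟨hx | hx, _⟩ h0
    · exact le_trans (by norm_num) (hD.low x hx h0)
    · exact ht.min x hx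

theorem nb_shadow_min (hD : DE D) (ht : CL D t)
    (hs : ∃ d ∈ D, wt d = 12 ∧ ip d t = 1) : minWtSet (shadow (nb D t)) = 12 := by
  rw [nb_shadow hD ht]
  obtain ⟨d, hd, hw, h1⟩ := hs
  refine minWtSet_eq ⟨d, ⟨Or.inl hd, h1⟩, ?_, hw⟩ ?_
  · rintro rfl
    rw [wt_zero] at hw
    omega
  · rintro x ⟨hx | hx, h1⟩ h0
    · exact hD.low x hx h0
    · have h3 := ht.min x hx
      have h4 := coset_wt hD ht hx
      rw [if_neg (by rw [h1]; decide)] at h4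
      omega

theorem nb_singlyEven (hD : DE D) (ht : CL D t) : IsSinglyEvenSelfDual (nb D t) :=
  ⟨nb_selfDual hD ht, t, t_mem ht, by rw [ht.ten]; omega⟩

theorem mem_nb_ten (hD : DE D) (ht : CL D t) (x : Fin n → ZMod 2) (hx : wt x = 10) :
    x ∈ nb D t ↔ x + t ∈ D := by
  constructor
  · rintro ⟨h | h, _⟩
    · have := hD.even x h
      omega
    · exact h
  · intro h
    refine ⟨Or.inr h, ?_⟩
    have := coset_wt hD ht h
    by_contra h0
    rw [if_neg h0] at this
    omega

end

theorem selfDual_finrank {C : Submodule (ZMod 2) (Fin n → ZMod 2)} (h : IsSelfDual C) :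
    2 * Module.finrank (ZMod 2) C = n := by
  let e := dotProductEquiv (ZMod 2) (Fin n)
  have h1 := Subspace.finrank_add_finrank_dualCoannihilator_eq
    (C.map (e : (Fin n → ZMod 2) →ₗ[ZMod 2] Module.Dual (ZMod 2) (Fin n → ZMod 2)))
  rw [LinearEquiv.finrank_map_eq, Module.finrank_fin_fun] at h1
  have h2 : (C.map (e : (Fin n → ZMod 2) →ₗ[ZMod 2]
      Module.Dual (ZMod 2) (Fin n → ZMod 2))).dualCoannihilator = C := by
    ext x
    rw [Submodule.mem_dualCoannihilator]
    have h3 : x ∈ C ↔ ∀ y ∈ C, ip x y = 0 := Set.ext_iff.mp h x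
    rw [h3]
    constructor
    · intro hx y hy
      rw [ip_comm]
      exact hx (e y) ⟨y, hy, rfl⟩
    · rintro hx _ ⟨y, hy, rfl⟩
      have := hx y hy
      rw [ip_comm] at this
      exact this
  rw [h2] at h1
  omega

/-! ### The invariant -/

open Classical in
/-- Number of words of weight 10 of `C` which are nonzero at `a` and `b`. -/
noncomputable def deg (C : Submodule (ZMod 2) (Fin n → ZMod 2)) (a b : Fin n) : ℕ :=
  (Finset.univ.filter fun x : Fin n → ZMod 2 => x ∈ C ∧ wt x = 10 ∧ x a ≠ 0 ∧ x b ≠ 0).card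

/-- The invariant. -/
noncomputable def inv (C : Submodule (ZMod 2) (Fin n → ZMod 2)) : ℕ :=
  ∑ a, ∑ b, (deg C a b % 511) ^ 2

theorem wt_comp (x : Fin n → ZMod 2) (σ : Equiv.Perm (Fin n)) : wt (x ∘ σ) = wt x := by
  rw [wt_eq_sum, wt_eq_sum]
  exact Equiv.sum_comp σ (fun i => if x i ≠ 0 then 1 else 0)

theorem deg_map (C : Submodule (ZMod 2) (Fin n → ZMod 2)) (σ : Equiv.Perm (Fin n)) (a b : Fin n) :
    deg (Submodule.map (LinearMap.funLeft (ZMod 2) (ZMod 2) σ) C) a b = deg C (σ a) (σ b) := by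
  classical
  symm
  refine Finset.card_bij (fun x _ => x ∘ σ) ?_ ?_ ?_
  · intro x hx
    simp only [Finset.mem_filter, Finset.mem_univ, true_and] at hx ⊢
    refine ⟨⟨x, hx.1, rfl⟩, ?_, hx.2.2⟩
    rw [wt_comp, hx.2.1]
  · intro x _ y _ h
    funext i
    have := congrFun h (σ.symm i)
    simpa using this
  · intro y hy
    simp only [Finset.mem_filter, Finset.mem_univ, true_and] at hy
    obtain ⟨⟨x, hx, rfl⟩, h⟩ := hy
    have e : LinearMap.funLeft (ZMod 2) (ZMod 2) σ x = x ∘ σ := rfl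
    rw [e] at h
    refine ⟨x, ?_, rfl⟩
    simp only [Finset.mem_filter, Finset.mem_univ, true_and]
    refine ⟨hx, ?_, h.2⟩
    rw [← wt_comp x σ, h.1]

theorem inv_equiv {C C' : Submodule (ZMod 2) (Fin n → ZMod 2)} (h : CodeEquiv C C') :
    inv C = inv C' := by
  obtain ⟨σ, rfl⟩ := h
  simp only [inv, deg_map]
  rw [← Equiv.sum_comp σ]
  refine Finset.sum_congr rfl fun a _ => ?_
  rw [← Equiv.sum_comp σ]

end SX

namespace SX

/-! ### The computation (all in bit-sliced form)

A list of natural numbers `rows` of length `m` describes a family of binary words of length `m`: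
the `j`-th word consists of the `j`-th bits of the entries of `rows`. -/

/-- XOR of the entries of a list selected by the binary digits of `m`. -/
noncomputable def xsel (us : List ℕ) : ℕ → ℕ :=
  List.rec (fun _ => 0)
    (fun u _ ih m => Nat.xor (Nat.mul (Nat.mod m 2) u) (ih (Nat.div m 2))) us

/-- The lowest `n` binary digits of `m`. -/
noncomputable def bits (n : ℕ) : ℕ → List ℕ :=
  Nat.rec (fun _ => []) (fun _ ih m => Nat.mod m 2 :: ih (Nat.div m 2)) n

/-- Add a bit to a (bit-sliced) binary counter. -/
noncomputable def addB (bs : List ℕ) : ℕ → List ℕ :=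
  List.rec (fun _ => []) (fun b _ ih c => Nat.xor b c :: ih (Nat.land b c)) bs

/-- Bit-sliced weight (mod 64) of the words. -/
noncomputable def cnt (rows : List ℕ) : List ℕ :=
  List.rec [0, 0, 0, 0, 0, 0] (fun r _ ih => addB ih r) rows

/-- Mask of words of weight at most 9. -/
def lowM (on : ℕ) (cs : List ℕ) : ℕ :=
  Nat.xor on (Nat.lor (Nat.lor (cs.getD 5 0) (cs.getD 4 0))
    (Nat.land (cs.getD 3 0) (Nat.lor (cs.getD 2 0) (cs.getD 1 0))))

/-- Mask of words of weight 10 (among those of weight at least 10). -/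
def tenM (on : ℕ) (cs : List ℕ) : ℕ :=
  Nat.land on (Nat.xor on (Nat.lor (Nat.lor (cs.getD 5 0) (cs.getD 4 0))
    (Nat.lor (cs.getD 2 0) (cs.getD 0 0))))

/-- Evaluate `n` before passing it on. -/
noncomputable def frc {α : Type} (n : ℕ) (k : ℕ → α) : α :=
  Nat.rec (k 0) (fun p _ => k (Nat.succ p)) n

/-- Evaluate a list of numbers before passing it on. -/
noncomputable def frcL {α : Type} (l : List ℕ) : (List ℕ → α) → α :=
  List.rec (fun k => k []) (fun a _ ih k => frc a (fun a' => ih (fun l' => k (a' :: l')))) l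

/-- Evaluate a list of lists of numbers before passing it on. -/
noncomputable def frcLL {α : Type} (l : List (List ℕ)) : (List (List ℕ) → α) → α :=
  List.rec (fun k => k []) (fun a _ ih k => frcL a (fun a' => ih (fun l' => k (a' :: l')))) l

/-- Positions of the one bits. -/
noncomputable def posn (k : ℕ) : ℕ → ℕ → List ℕ → List ℕ :=
  Nat.rec (fun W off acc => Bool.rec (off :: acc) acc (Nat.beq W 0))
    (fun k ih W off acc => Bool.rec
      (ih (Nat.mod W (Nat.pow 2 (Nat.pow 2 k))) off
        (ih (Nat.shiftRight W (Nat.pow 2 k)) (Nat.add off (Nat.pow 2 k)) acc))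
      acc (Nat.beq W 0)) k

/-- Positions of the one bits, in blocks of length 4096. -/
noncomputable def blocks (n : ℕ) : ℕ → List (List ℕ) :=
  Nat.rec (fun _ => [])
    (fun _ ih W => posn 12 (Nat.mod W (Nat.pow 2 4096)) 0 [] :: ih (Nat.shiftRight W 4096)) n

/-- Collect the bits of `V` at the given positions in base 512. -/
noncomputable def pk (V : ℕ) (z : ℕ) (ps : List ℕ) : ℕ :=
  List.rec z (fun p _ ih => Nat.add (Nat.land 1 (Nat.shiftRight V p)) (Nat.mul 512 ih)) ps

/-- Collect the bits of `V` at the given positions (in blocks) in base 512. -/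
noncomputable def pkB (z : ℕ) (pss : List (List ℕ)) : ℕ → ℕ :=
  List.rec (fun _ => z)
    (fun ps _ ih V => pk (Nat.mod V (Nat.pow 2 4096)) (ih (Nat.shiftRight V 4096)) ps) pss

/-- Sum over a list. -/
noncomputable def lsum (f : ℕ → ℕ) (l : List ℕ) : ℕ :=
  List.rec 0 (fun a _ ih => Nat.add (f a) ih) l

/-- Sum of the squares of the pair degrees. -/
noncomputable def sumsq (Rs : List ℕ) : ℕ :=
  lsum (fun a => lsum (fun b => Nat.pow (Nat.mod (Nat.land a b) 511) 2) Rs) Rs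

/-- `List.zipWith`, by the recursor. -/
noncomputable def zipW (f : ℕ → ℕ → ℕ) (l : List ℕ) : List ℕ → List ℕ :=
  List.rec (fun _ => [])
    (fun a _ ih l' => List.rec [] (fun b bs _ => f a b :: ih bs) l') l

/-- `List.map`, by the recursor. -/
noncomputable def lmap (f : ℕ → ℕ) (l : List ℕ) : List ℕ :=
  List.rec [] (fun a _ ih => f a :: ih) l

/-- Append. -/
noncomputable def app (l l' : List ℕ) : List ℕ :=
  List.rec l' (fun a _ ih => a :: ih) l

/-- Words of length `m + 1` and weight at most `r + 1` from words of length `m`. -/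
noncomputable def comb (a b : ℕ × List ℕ) : ℕ × List ℕ :=
  (Nat.add a.1 b.1, Nat.shiftLeft (Nat.sub (Nat.pow 2 b.1) 1) a.1 ::
    zipW (fun x y => Nat.lor x (Nat.shiftLeft y a.1)) a.2 b.2)

noncomputable def combs (l : List (ℕ × List ℕ)) : ℕ × List ℕ → List (ℕ × List ℕ) :=
  List.rec (fun _ => []) (fun a _ ih b => comb a b :: ih a) l

noncomputable def stepL (l : List (ℕ × List ℕ)) : List (ℕ × List ℕ) :=
  List.rec [] (fun a as _ => (a.1, 0 :: a.2) :: combs as a) l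

noncomputable def layer (m : ℕ) : List (ℕ × List ℕ) :=
  Nat.rec [(1, []), (1, []), (1, []), (1, []), (1, []), (1, [])] (fun _ ih => stepL ih) m

/-- All words of length 28 and weight at most 5. -/
noncomputable def E5 : ℕ × List ℕ := (layer 28).getD 5 (1, [])

/-- All words of length 28 and weight at most 4. -/
noncomputable def E4 : ℕ × List ℕ := (layer 28).getD 4 (1, [])

/-- Rows of the matrix `A` (bit `i` of the `k`-th entry is `A k i`). -/
def rowsA : List ℕ :=
  [6414954, 12813525, 25627050, 51254100, 102508200, 205000017,
   141580962, 14742852, 29469321, 58922259, 117844518, 235672653,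
   202926234, 137417013, 180924609, 93413763, 186811143, 105203214,
   210406428, 152393784, 36368496, 72720609, 145424835, 22430598,
   44861196, 89722392, 179444784, 90470496]

/-- Columns of the matrix `A` (bit `k` of the `i`-th entry is `A k i`). -/
def colsA : List ℕ :=
  [6417186, 12817989, 25635978, 51255573, 102511146, 205005909,
   141576363, 14733654, 29467308, 58918233, 117836466, 235672932,
   202926792, 137418129, 144355521, 20275587, 40534791, 81069582,
   162139164, 55859256, 111718512, 223420641, 178405827, 88392582,
   176785164, 85151256, 170302512, 72185952]

/-- The number with `c` binary digits, all equal to one. -/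
noncomputable def onOf (c : ℕ) : ℕ := Nat.sub (Nat.pow 2 c) 1
noncomputable def on5 : ℕ := onOf E5.1
noncomputable def on4 : ℕ := onOf E4.1
noncomputable def V5 : List ℕ := lmap (xsel E5.2) colsA
noncomputable def V4 : List ℕ := lmap (xsel E4.2) rowsA

/-- Translation vector. -/
noncomputable def offs (M tA tB : List ℕ) : List ℕ :=
  zipW (fun c b => Nat.xor b (xsel tA c)) M tB

noncomputable def vrows (on : ℕ) (V s : List ℕ) : List ℕ :=
  zipW (fun v b => Nat.xor v (Nat.mul b on)) V s

noncomputable def rowsL (tL tR : List ℕ) : List ℕ := app E5.2 (vrows on5 V5 (offs colsA tL tR))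
noncomputable def rowsR (tL tR : List ℕ) : List ℕ := app (vrows on4 V4 (offs rowsA tR tL)) E4.2

noncomputable def orAll (l : List ℕ) : ℕ := List.rec 0 (fun a _ ih => Nat.lor a ih) l

/-- Check that the doubly even code has no nonzero words of weight at most 9. -/
noncomputable def chkD : Bool :=
  Nat.beq (Nat.land (orAll E5.2) (lowM on5 (cnt (rowsL (bits 28 0) (bits 28 0))))) 0 &&
  Nat.beq (Nat.land (orAll E4.2) (lowM on4 (cnt (rowsR (bits 28 0) (bits 28 0))))) 0

/-- The invariant, from the rows and the masks of the words of weight 10. -/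
noncomputable def invF (RL RR : List ℕ) (WL WR : ℕ) (F : ℕ) : Bool :=
  frcLL (blocks 30 WL) (fun bL => frcLL (blocks 6 WR) (fun bR =>
    Nat.beq (sumsq (zipW (fun a b => pkB (pkB 0 bR b) bL a) RL RR)) F))

/-- Check of the two enumerations. -/
noncomputable def chkF (RL RR : List ℕ) (csL csR : List ℕ) (F : ℕ) : Bool :=
  cond (Nat.beq (lowM on5 csL) 0) (cond (Nat.beq (lowM on4 csR) 0)
   (invF RL RR (tenM on5 csL) (tenM on4 csR) F) false) false

/-- Check of one coset: all weights are at least 10; the invariant is `F`. -/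
noncomputable def chk (tL tR : List ℕ) (F : ℕ) : Bool :=
  chkF (rowsL tL tR) (rowsR tL tR) (cnt (rowsL tL tR)) (cnt (rowsR tL tR)) F

noncomputable def chkP (p : ℕ × ℕ) : Bool :=
  chk (bits 28 p.1) (bits 28 (Nat.shiftRight p.1 28)) p.2

/-- Coset leaders and values of the invariant. -/
def dat : List (ℕ × ℕ) :=
  [(4402411481153, 437920), (503988249, 440608), (269519979, 441616), (324019473, 441664),
   (470033612, 441808), (269878571, 441840), (1543566352, 441920), (488247306, 441936),
   (281874488, 441984), (889793032, 442000), (872813348, 442032), (280822464, 442048),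
   (3756131, 442112), (279326882, 442224), (315889168, 442352), (857276562, 442368),
   (277519648, 442384), (412499994, 442400), (288375156, 442416), (284558465, 442432),
   (275940545, 442464), (19491092, 442544), (310653980, 442576), (377620161, 442592),
   (403457101, 442640), (268650844, 442656), (454332488, 442688), (353423636, 442704),
   (293872088, 442720), (288753864, 442784), (278399545, 442800), (269296803, 442816),
   (424331280, 442864), (304618648, 442992), (273033414, 443008), (772000, 443056),
   (308434000, 443088), (305184918, 443104), (282460427, 443120), (270208084, 443136),
   (277120458, 443168), (361251490, 443200), (353371601, 443280), (307942400, 443296),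
   (957255688, 443328), (386411272, 443360), (421568598, 443376), (815940248, 443408),
   (296513537, 443504), (1954713618, 443520), (1350058066, 443568), (271131726, 443648),
   (302555324, 443664), (398459403, 443680), (277709873, 443712), (303379476, 443760),
   (839191177, 443808), (353648730, 443824), (404885734, 443872), (3035752, 443888),
   (319602710, 443904), (294467072, 443936), (419828065, 443952), (407309408, 443968),
   (5817114, 443984), (310674634, 444048), (2911400, 444080), (404177072, 444096),
   (901924928, 444160), (969921, 444192), (822674132, 444288), (377488779, 444320),
   (2358336, 444352), (277381215, 444512), (423118352, 444592), (839713050, 444624),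
   (275289185, 444656), (4481645, 444720), (277250410, 444752), (345003019, 444784),
   (288630281, 444800), (1233516, 444848), (939869219, 444880), (291901732, 444960),
   (336994508, 444992), (707522, 445056), (405099680, 445088), (891818146, 445104),
   (1376862531, 445312), (306579499, 445376), (18400453, 445664), (1361578596, 445680)]

noncomputable def chkRange (a n : ℕ) : Bool :=
  ((dat.drop a).take n).all chkP

end SX

namespace SX

/-! ### Part 2: bit-sliced words -/

/-- The `j`-th word. -/
def wd (rows : List ℕ) (j : ℕ) : List Bool := rows.map (·.testBit j)

@[simp] theorem wd_nil (j : ℕ) : wd [] j = [] := rfl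
@[simp] theorem wd_cons (u : ℕ) (us : List ℕ) (j : ℕ) : wd (u :: us) j = u.testBit j :: wd us j :=
  rfl
theorem wd_length (us : List ℕ) (j : ℕ) : (wd us j).length = us.length := by simp [wd]
theorem wd_append (l l' : List ℕ) (j : ℕ) : wd (l ++ l') j = wd l j ++ wd l' j := by simp [wd]
theorem wd_getD (us : List ℕ) (j a : ℕ) :
    (wd us j).getD a false = (us.getD a 0).testBit j := by
  simp only [wd, List.getD_eq_getElem?_getD, List.getElem?_map]
  cases us[a]? <;> simp

theorem zipW_eq (f : ℕ → ℕ → ℕ) (l l' : List ℕ) : zipW f l l' = List.zipWith f l l' := by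
  induction l generalizing l' with
  | nil => rfl
  | cons a l ih =>
    cases l' with
    | nil => rfl
    | cons b l' =>
      rw [List.zipWith_cons_cons, ← ih]
      rfl

theorem lmap_eq (f : ℕ → ℕ) (l : List ℕ) : lmap f l = l.map f := by
  induction l with
  | nil => rfl
  | cons a l ih => rw [List.map_cons, ← ih]; rfl

theorem app_eq (l l' : List ℕ) : app l l' = l ++ l' := by
  induction l with
  | nil => rfl
  | cons a l ih => rw [List.cons_append, ← ih]; rfl

/-! #### Enumeration of words of small weight -/

/-- `p` lists (without repetition) the words of length `m` and weight at most `r`. -/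
structure Good (m r : ℕ) (p : ℕ × List ℕ) : Prop where
  len : p.2.length = m
  lt : ∀ u ∈ p.2, u < 2 ^ p.1
  le : ∀ j < p.1, (wd p.2 j).count true ≤ r
  surj : ∀ w : List Bool, w.length = m → w.count true ≤ r → ∃ j < p.1, wd p.2 j = w
  inj : ∀ i < p.1, ∀ j < p.1, wd p.2 i = wd p.2 j → i = j

theorem good_nil (r : ℕ) : Good 0 r (1, []) where
  len := rfl
  lt := by simp
  le := by simp
  surj := by
    intro w hw _
    exact ⟨0, by simp, by simp [List.length_eq_zero_iff.mp hw]⟩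
  inj := by
    intro i hi j hj _
    simp only at hi hj
    omega

theorem good_zero {m : ℕ} {p : ℕ × List ℕ} (h : Good m 0 p) : Good (m + 1) 0 (p.1, 0 :: p.2) where
  len := by simp [h.len]
  lt := by
    intro u hu
    rcases List.mem_cons.mp hu with rfl | hu
    · exact Nat.two_pow_pos _
    · exact h.lt u hu
  le := by
    intro j hj
    simpa using h.le j hj
  surj := by
    intro w hw hc
    cases w with
    | nil => simp at hw
    | cons b w =>
      cases b
      · obtain ⟨j, hj, hj'⟩ := h.surj w (by simpa using hw) (by simpa using hc)
        exact ⟨j, hj, by simp [hj']⟩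
      · simp at hc
  inj := by
    intro i hi j hj hij
    refine h.inj i hi j hj ?_
    simpa using hij

theorem wd_comb {m : ℕ} {a b : ℕ × List ℕ} (ha : a.2.length = m) (hb : b.2.length = m)
    (hl : ∀ u ∈ a.2, u < 2 ^ a.1) (j : ℕ) (hj : j < a.1 + b.1) :
    wd (comb a b).2 j = if j < a.1 then false :: wd a.2 j else true :: wd b.2 (j - a.1) := by
  have key : ∀ l l' : List ℕ, l.length = l'.length → (∀ u ∈ l, u < 2 ^ a.1) →
      wd (List.zipWith (fun x y => x ||| (y <<< a.1)) l l') j =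
        if j < a.1 then wd l j else wd l' (j - a.1) := by
    intro l
    induction l with
    | nil =>
      intro l' h _
      have : l' = [] := List.length_eq_zero_iff.mp h.symm
      simp [this]
    | cons x l ih =>
      intro l' h hl
      cases l' with
      | nil => simp at h
      | cons y l' =>
        have hx := hl x (by simp)
        rw [List.zipWith_cons_cons, wd_cons, wd_cons, wd_cons,
          ih l' (by simpa using h) fun u hu => hl u (by simp [hu])]
        rw [Nat.testBit_or, Nat.testBit_shiftLeft]
        split_ifs with hja
        · simp [hja]
        · have : x.testBit j = false := Nat.testBit_lt_two_pow
            (lt_of_lt_of_le hx (Nat.pow_le_pow_right (by norm_num) (by omega)))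
          simp [this, show a.1 ≤ j by omega]
  have e : (comb a b).2 = ((2 ^ b.1 - 1) <<< a.1) ::
      List.zipWith (fun x y => x ||| (y <<< a.1)) a.2 b.2 := by
    rw [← zipW_eq]; rfl
  rw [e, wd_cons, key _ _ (ha.trans hb.symm) hl, Nat.testBit_shiftLeft, Nat.testBit_two_pow_sub_one]
  split_ifs with hja
  · simp [hja]
  · simp [show a.1 ≤ j by omega, show j - a.1 < b.1 by omega]

theorem good_comb {m r : ℕ} {a b : ℕ × List ℕ} (ha : Good m (r + 1) a) (hb : Good m r b) :
    Good (m + 1) (r + 1) (comb a b) := by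
  have e1 : (comb a b).1 = a.1 + b.1 := rfl
  have e2 := wd_comb ha.len hb.len ha.lt
  refine ⟨?_, ?_, ?_, ?_, ?_⟩
  · change (_ :: zipW _ a.2 b.2).length = _
    rw [zipW_eq]
    simp [ha.len, hb.len]
  · change ∀ u ∈ ((2 ^ b.1 - 1) <<< a.1) :: zipW (fun x y => x ||| (y <<< a.1)) a.2 b.2, _
    rw [zipW_eq, e1]
    intro u hu
    have hs : ∀ y, y < 2 ^ b.1 → y <<< a.1 < 2 ^ (a.1 + b.1) := by
      intro y hy
      rw [Nat.shiftLeft_eq, pow_add, mul_comm]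
      exact Nat.mul_lt_mul_of_pos_left hy (Nat.two_pow_pos _)
    rcases List.mem_cons.mp hu with rfl | hu
    · exact hs _ (Nat.sub_lt (Nat.two_pow_pos _) one_pos)
    · obtain ⟨i, hi, rfl⟩ := List.mem_iff_getElem.mp hu
      rw [List.getElem_zipWith]
      refine Nat.or_lt_two_pow ?_ (hs _ (hb.lt _ (List.getElem_mem _)))
      exact lt_of_lt_of_le (ha.lt _ (List.getElem_mem _))
        (Nat.pow_le_pow_right (by norm_num) (by omega))
  · intro j hj
    rw [e1] at hj
    rw [e2 j hj]
    split_ifs with h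
    · simpa using ha.le j h
    · simpa using hb.le (j - a.1) (by omega)
  · intro w hw hc
    cases w with
    | nil => simp at hw
    | cons x w =>
      cases x
      · obtain ⟨j, hj, hj'⟩ := ha.surj w (by simpa using hw) (by simpa using hc)
        refine ⟨j, by omega, ?_⟩
        rw [e2 j (by omega), if_pos hj, hj']
      · obtain ⟨j, hj, hj'⟩ := hb.surj w (by simpa using hw) (by simpa using hc)
        refine ⟨a.1 + j, by omega, ?_⟩
        rw [e2 _ (by omega), if_neg (by omega), Nat.add_sub_cancel_left, hj']
  · intro i hi j hj hij
    rw [e1] at hi hj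
    rw [e2 i hi, e2 j hj] at hij
    split_ifs at hij with h1 h2 h2
    · exact ha.inj i h1 j h2 (by simpa using hij)
    · simp at hij
    · simp at hij
    · have := hb.inj (i - a.1) (by omega) (j - a.1) (by omega) (by simpa using hij)
      omega

/-- Consecutive weight bounds. -/
def LG (m : ℕ) : ℕ → List (ℕ × List ℕ) → Prop
  | _, [] => True
  | r, a :: l => Good m r a ∧ LG m (r + 1) l

theorem LG_combs {m : ℕ} (l : List (ℕ × List ℕ)) (r : ℕ) (b : ℕ × List ℕ) (hb : Good m r b)
    (hl : LG m (r + 1) l) : LG (m + 1) (r + 1) (combs l b) := by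
  induction l generalizing r b with
  | nil => trivial
  | cons a l ih => exact ⟨good_comb hl.1 hb, ih (r + 1) a hl.1 hl.2⟩

theorem combs_length (l : List (ℕ × List ℕ)) (b : ℕ × List ℕ) : (combs l b).length = l.length := by
  induction l generalizing b with
  | nil => rfl
  | cons a l ih => exact congrArg (· + 1) (ih a)

theorem LG_layer (m : ℕ) : LG m 0 (layer m) ∧ (layer m).length = 6 := by
  induction m with
  | zero =>
    exact ⟨⟨good_nil _, good_nil _, good_nil _, good_nil _, good_nil _, good_nil _, trivial⟩, rfl⟩
  | succ m ih =>
    change LG (m + 1) 0 (stepL (layer m)) ∧ (stepL (layer m)).length = 6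
    revert ih
    cases layer m with
    | nil => intro h; exact absurd h.2 (by simp)
    | cons a l =>
      intro h
      refine ⟨⟨good_zero h.1.1, LG_combs l 0 a h.1.1 h.1.2⟩, ?_⟩
      change (combs l a).length + 1 = 6
      rw [combs_length]
      exact h.2

theorem LG_getD {m : ℕ} (l : List (ℕ × List ℕ)) (r k : ℕ) (d : ℕ × List ℕ) (h : LG m r l)
    (hk : k < l.length) : Good m (r + k) (l.getD k d) := by
  induction l generalizing r k with
  | nil => simp at hk
  | cons a l ih =>
    cases k with
    | zero => exact h.1
    | succ k =>
      have := ih (r + 1) k h.2 (by simpa using hk)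
      rw [show r + (k + 1) = r + 1 + k by omega]
      simpa using this

theorem good_E5 : Good 28 5 E5 := by
  have := LG_getD (layer 28) 0 5 (1, []) (LG_layer 28).1 (by rw [(LG_layer 28).2]; norm_num)
  exact this

theorem good_E4 : Good 28 4 E4 := by
  have := LG_getD (layer 28) 0 4 (1, []) (LG_layer 28).1 (by rw [(LG_layer 28).2]; norm_num)
  exact this

/-! #### Counters -/

/-- Add a bit to a binary counter. -/
def addBB : List Bool → Bool → List Bool
  | [], _ => []
  | b :: bs, c => (b ^^ c) :: addBB bs (b && c)

/-- Value of a binary counter. -/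
def bval : List Bool → ℕ
  | [] => 0
  | b :: bs => b.toNat + 2 * bval bs

theorem addBB_length (bs : List Bool) (c : Bool) : (addBB bs c).length = bs.length := by
  induction bs generalizing c with
  | nil => rfl
  | cons b bs ih => simp [addBB, ih]

theorem bval_addBB (bs : List Bool) (c : Bool) :
    ∃ k, bval (addBB bs c) + 2 ^ bs.length * k = bval bs + c.toNat := by
  induction bs generalizing c with
  | nil => exact ⟨c.toNat, by simp [addBB, bval]⟩
  | cons b bs ih =>
    obtain ⟨k, hk⟩ := ih (b && c)
    refine ⟨k, ?_⟩
    have e : 2 ^ (b :: bs).length * k = 2 * (2 ^ bs.length * k) := by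
      rw [List.length_cons, pow_succ]; ring
    rw [e]
    simp only [addBB, bval]
    cases b <;> cases c <;> simp at hk ⊢ <;> omega

theorem wd_addB (bs : List ℕ) (c j : ℕ) : wd (addB bs c) j = addBB (wd bs j) (c.testBit j) := by
  induction bs generalizing c with
  | nil => rfl
  | cons b bs ih =>
    change wd ((b ^^^ c) :: addB bs (b &&& c)) j = _
    rw [wd_cons, ih]
    simp [addBB]

/-- Counter of the number of ones. -/
def cntB : List Bool → List Bool
  | [] => [false, false, false, false, false, false]
  | b :: bs => addBB (cntB bs) b

theorem wd_cnt (rows : List ℕ) (j : ℕ) : wd (cnt rows) j = cntB (wd rows j) := by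
  induction rows with
  | nil => simp [cntB, cnt, wd]
  | cons r rows ih =>
    change wd (addB (cnt rows) r) j = _
    rw [wd_addB, ih]
    rfl

theorem cntB_length (bs : List Bool) : (cntB bs).length = 6 := by
  induction bs with
  | nil => rfl
  | cons b bs ih => rw [cntB, addBB_length, ih]

theorem bval_cntB (bs : List Bool) : ∃ k, bval (cntB bs) + 64 * k = bs.count true := by
  induction bs with
  | nil => exact ⟨0, rfl⟩
  | cons b bs ih =>
    obtain ⟨k, hk⟩ := ih
    obtain ⟨k', hk'⟩ := bval_addBB (cntB bs) b
    rw [cntB_length] at hk'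
    refine ⟨k + k', ?_⟩
    rw [cntB]
    cases b
    · simp at hk' ⊢; omega
    · simp at hk' ⊢; omega

theorem bval6 (l : List Bool) (h : l.length = 6) : bval l < 64 ∧
    ((!((l.getD 5 false || l.getD 4 false) ||
      (l.getD 3 false && (l.getD 2 false || l.getD 1 false)))) = decide (bval l ≤ 9)) ∧
    (10 ≤ bval l → (!((l.getD 5 false || l.getD 4 false) ||
      (l.getD 2 false || l.getD 0 false))) = decide (bval l = 10)) := by
  match l, h with
  | [a, b, c, d, e, f], _ =>
    revert a b c d e f
    decide

theorem cntB_spec (bs : List Bool) (h : bs.length < 64) : bval (cntB bs) = bs.count true := by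
  obtain ⟨k, hk⟩ := bval_cntB bs
  have := List.count_le_length (a := true) (l := bs)
  omega

theorem lowM_testBit (on : ℕ) (rows : List ℕ) (j : ℕ) (h : rows.length < 64)
    (hon : on.testBit j = true) :
    (lowM on (cnt rows)).testBit j = decide ((wd rows j).count true ≤ 9) := by
  have h1 := (bval6 (wd (cnt rows) j) (by rw [wd_cnt, cntB_length])).2.1
  rw [wd_cnt, cntB_spec _ (by rwa [wd_length]), ← wd_cnt] at h1
  rw [← h1]
  simp only [wd_getD]
  change Nat.testBit (on ^^^ ((_ ||| _) ||| (_ &&& (_ ||| _)))) j = _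
  simp only [Nat.testBit_xor, Nat.testBit_or, Nat.testBit_and, hon, Bool.true_xor]

theorem tenM_testBit (on : ℕ) (rows : List ℕ) (j : ℕ) (h : rows.length < 64)
    (h10 : on.testBit j = true → 10 ≤ (wd rows j).count true) :
    (tenM on (cnt rows)).testBit j = (on.testBit j && decide ((wd rows j).count true = 10)) := by
  have h1 := (bval6 (wd (cnt rows) j) (by rw [wd_cnt, cntB_length])).2.2
  rw [wd_cnt, cntB_spec _ (by rwa [wd_length]), ← wd_cnt] at h1
  change Nat.testBit (on &&& (on ^^^ ((_ ||| _) ||| (_ ||| _)))) j = _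
  simp only [Nat.testBit_xor, Nat.testBit_or, Nat.testBit_and]
  cases hon : on.testBit j
  · rfl
  · rw [← h1 (h10 hon)]
    simp only [wd_getD, Bool.true_xor, Bool.true_and]

/-! #### Packing -/

theorem land_pack (b b' I I' : ℕ) (hb : b < 512) (hb' : b' < 512) :
    (b + 512 * I) &&& (b' + 512 * I') = (b &&& b') + 512 * (I &&& I') := by
  have e : ∀ x y : ℕ, x + 512 * y = 2 ^ 9 * y + x := by intro x y; omega
  rw [e, e, e]
  apply Nat.eq_of_testBit_eq
  intro j
  rw [Nat.testBit_and, Nat.testBit_two_pow_mul_add _ (by omega),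
    Nat.testBit_two_pow_mul_add _ (by omega),
    Nat.testBit_two_pow_mul_add _ (lt_of_le_of_lt Nat.and_le_left (by omega))]
  split_ifs <;> simp

theorem pk_land (V V' z z' : ℕ) (ps : List ℕ) :
    (pk V z ps &&& pk V' z' ps) % 511 =
      (ps.countP (fun p => V.testBit p && V'.testBit p) + (z &&& z')) % 511 := by
  induction ps with
  | nil => simp [pk]
  | cons p ps ih =>
    have e : ∀ V z, pk V z (p :: ps) = (1 &&& (V >>> p)) + 512 * pk V z ps := fun _ _ => rfl
    have e1 : ∀ V : ℕ, (1 &&& (V >>> p)) = (V.testBit p).toNat := by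
      intro V
      rw [Nat.one_and_eq_mod_two, Nat.toNat_testBit, Nat.shiftRight_eq_div_pow]
    rw [e, e, e1, e1, land_pack _ _ _ _ (by cases V.testBit p <;> simp)
      (by cases V'.testBit p <;> simp), List.countP_cons]
    have e2 : (V.testBit p).toNat &&& (V'.testBit p).toNat =
        if (V.testBit p && V'.testBit p) = true then 1 else 0 := by
      cases V.testBit p <;> cases V'.testBit p <;> rfl
    rw [e2]
    omega

theorem posn_eq (k W off : ℕ) (acc : List ℕ) (hW : W < 2 ^ 2 ^ k) :
    posn k W off acc = ((List.range (2 ^ k)).filter (W.testBit ·)).map (off + ·) ++ acc := by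
  induction k generalizing W off acc with
  | zero =>
    have : W = 0 ∨ W = 1 := by simp at hW; omega
    rcases this with rfl | rfl
    · rfl
    · rfl
  | succ k ih =>
    by_cases h0 : W = 0
    · subst h0
      simp [posn]
    · have e : posn (k + 1) W off acc = posn k (W % 2 ^ 2 ^ k) off
          (posn k (W >>> 2 ^ k) (off + 2 ^ k) acc) := by
        obtain ⟨w, rfl⟩ := Nat.exists_eq_succ_of_ne_zero h0
        rfl
      have hp : (2 : ℕ) ^ 2 ^ (k + 1) = 2 ^ 2 ^ k * 2 ^ 2 ^ k := by
        rw [pow_succ, ← pow_add]; congr 1; omega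
      rw [e, ih _ _ _ (Nat.mod_lt _ (Nat.two_pow_pos _)), ih, ← List.append_assoc]
      · congr 1
        rw [show 2 ^ (k + 1) = 2 ^ k + 2 ^ k by rw [pow_succ]; omega, List.range_add,
          List.filter_append, List.map_append, List.filter_map, List.map_map]
        congr 1
        · congr 1
          refine List.filter_congr fun i hi => ?_
          rw [Nat.testBit_mod_two_pow]
          simp [List.mem_range.mp hi]
        · congr 1
          · funext i
            simp [add_assoc]
          · refine List.filter_congr fun i _ => ?_
            simp [Nat.testBit_shiftRight]
      · rw [Nat.shiftRight_eq_div_pow]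
        exact Nat.div_lt_of_lt_mul (by rwa [← hp])

theorem posn_eq' (k N W : ℕ) (hN : 2 ^ k = N) (hW : W < 2 ^ N) :
    posn k W 0 [] = (List.range N).filter (W.testBit ·) := by
  subst hN
  rw [posn_eq k W 0 [] hW]
  simp

theorem pkB_land (n W V V' z z' : ℕ) :
    (pkB z (blocks n W) V &&& pkB z' (blocks n W) V') % 511 =
      ((List.range (4096 * n)).countP (fun p => W.testBit p && V.testBit p && V'.testBit p) +
        (z &&& z')) % 511 := by
  induction n generalizing W V V' with
  | zero => simp [blocks, pkB]
  | succ n ih =>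
    have e : blocks (n + 1) W = posn 12 (W % 2 ^ 4096) 0 [] :: blocks n (W >>> 4096) := rfl
    have e1 : ∀ V z ps pss, pkB z (ps :: pss) V = pk (V % 2 ^ 4096) (pkB z pss (V >>> 4096)) ps :=
      fun _ _ _ _ => rfl
    rw [e, e1, e1, pk_land, posn_eq' 12 4096 _ (by norm_num) (Nat.mod_lt _ (Nat.two_pow_pos _)), Nat.add_mod, ih,
      ← Nat.add_mod, ← add_assoc]
    refine congrArg (fun q => (q + (z &&& z')) % 511) ?_
    rw [show 4096 * (n + 1) = 4096 + 4096 * n by ring, List.range_add, List.countP_append,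
      List.countP_map]
    refine congrArg₂ (· + ·) ?_ ?_
    · rw [List.countP_filter]
      refine List.countP_congr fun p hp => ?_
      rw [List.mem_range] at hp
      simp only [Nat.testBit_mod_two_pow, hp, decide_true, Bool.true_and]
      cases W.testBit p <;> cases V.testBit p <;> cases V'.testBit p <;> simp
    · refine List.countP_congr fun p hp => ?_
      simp [Nat.testBit_shiftRight]

/-! #### The sum -/

theorem frc_eq {α : Type} (m : ℕ) (k : ℕ → α) : frc m k = k m := by cases m <;> rfl

theorem frcL_eq {α : Type} (l : List ℕ) (k : List ℕ → α) : frcL l k = k l := by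
  induction l generalizing k with
  | nil => rfl
  | cons a l ih =>
    change frc a (fun a' => frcL l (fun l' => k (a' :: l'))) = _
    rw [frc_eq, ih]

theorem frcLL_eq {α : Type} (l : List (List ℕ)) (k : List (List ℕ) → α) : frcLL l k = k l := by
  induction l generalizing k with
  | nil => rfl
  | cons a l ih =>
    change frcL a (fun a' => frcLL l (fun l' => k (a' :: l'))) = _
    rw [frcL_eq, ih]

theorem lsum_eq (f : ℕ → ℕ) (l : List ℕ) {m : ℕ} (hl : l.length = m) :
    lsum f l = ∑ a : Fin m, f (l.getD a 0) := by
  induction l generalizing m with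
  | nil => subst hl; rfl
  | cons a l ih =>
    subst hl
    change f a + lsum f l = _
    rw [ih rfl]
    exact (Fin.sum_univ_succ (fun i : Fin (l.length + 1) => f ((a :: l).getD i 0))).symm

theorem sumsq_eq (l : List ℕ) {m : ℕ} (hl : l.length = m) :
    sumsq l = ∑ a : Fin m, ∑ b : Fin m, ((l.getD a 0 &&& l.getD b 0) % 511) ^ 2 := by
  rw [sumsq, lsum_eq _ _ hl]
  refine Finset.sum_congr rfl fun a _ => ?_
  rw [lsum_eq _ _ hl]
  rfl

end SX

namespace SX

/-! ### Part 3: words as vectors -/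

section words
variable {n m : ℕ}

/-- A bit as an element of the field. -/
def zb (b : Bool) : ZMod 2 := cond b 1 0

theorem zb_xor (a b : Bool) : zb (a ^^ b) = zb a + zb b := by revert a b; decide
theorem zb_and (a b : Bool) : zb (a && b) = zb a * zb b := by revert a b; decide
theorem dec_zb (a : Bool) : decide (zb a ≠ 0) = a := by revert a; decide
theorem zb_dec (a : ZMod 2) : zb (decide (a ≠ 0)) = a := by revert a; decide

/-- The list of bits of a vector. -/
def bl (x : Fin n → ZMod 2) : List Bool := List.ofFn fun i => decide (x i ≠ 0)

theorem bl_length (x : Fin n → ZMod 2) : (bl x).length = n := by simp [bl]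

theorem bl_getD (x : Fin n → ZMod 2) (i : Fin n) : (bl x).getD i false = decide (x i ≠ 0) := by
  rw [List.getD_eq_getElem _ _ (by rw [bl_length]; exact i.2)]
  simp [bl]

theorem bl_inj {x y : Fin n → ZMod 2} (h : bl x = bl y) : x = y := by
  funext i
  rw [← zb_dec (x i), ← bl_getD, h, bl_getD, zb_dec]

theorem exists_bl (w : List Bool) (hw : w.length = n) : ∃ x : Fin n → ZMod 2, w = bl x := by
  refine ⟨fun i => zb (w.getD i false), ?_⟩
  apply List.ext_getElem
  · rw [bl_length, hw]
  · intro i h1 h2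
    simp only [bl, List.getElem_ofFn, dec_zb]
    rw [List.getD_eq_getElem _ _ h1]

theorem wt_bl (x : Fin n → ZMod 2) : wt x = (bl x).count true := by
  induction n with
  | zero => rw [wt_eq_sum]; rfl
  | succ n ih =>
    have h := ih (fun i => x i.succ)
    rw [wt_eq_sum] at h ⊢
    have e : bl x = decide (x 0 ≠ 0) :: bl (fun i => x i.succ) := by
      rw [bl, List.ofFn_succ, bl]
    rw [Fin.sum_univ_succ, h, e, List.count_cons]
    rw [add_comm]
    congr 1
    by_cases h0 : x 0 = 0 <;> simp [h0]

theorem bl_append (x : Fin n → ZMod 2) (y : Fin m → ZMod 2) :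
    bl (Fin.append x y) = bl x ++ bl y := by
  rw [bl, bl, bl, ← List.ofFn_fin_append]
  congr 1
  funext i
  refine Fin.addCases (fun i => ?_) (fun i => ?_) i <;> simp

theorem wd_eq_bl {L : List ℕ} {j : ℕ} {x : Fin n → ZMod 2} :
    wd L j = bl x ↔ L.length = n ∧ ∀ i : Fin n, zb ((L.getD i 0).testBit j) = x i := by
  constructor
  · intro h
    refine ⟨by rw [← wd_length L j, h, bl_length], fun i => ?_⟩
    rw [← wd_getD, h, bl_getD, zb_dec]
  · rintro ⟨h1, h2⟩
    obtain ⟨y, hy⟩ := exists_bl (n := n) (wd L j) (by rw [wd_length, h1])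
    rw [hy]
    congr 1
    funext i
    rw [← h2 i, ← wd_getD, hy, bl_getD, zb_dec]

/-- XOR of selected bits. -/
def bx : List Bool → ℕ → Bool
  | [], _ => false
  | b :: bs, c => (c.testBit 0 && b) ^^ bx bs (c / 2)

theorem xsel_testBit (us : List ℕ) (c j : ℕ) : (xsel us c).testBit j = bx (wd us j) c := by
  induction us generalizing c with
  | nil => exact Nat.zero_testBit j
  | cons u us ih =>
    change Nat.testBit ((c % 2 * u) ^^^ xsel us (c / 2)) j = _
    rw [Nat.testBit_xor, ih, wd_cons, bx, Nat.testBit_zero]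
    rcases Nat.mod_two_eq_zero_or_one c with h | h <;> simp [h]

theorem zb_bx (x : Fin n → ZMod 2) (c : ℕ) : zb (bx (bl x) c) = ∑ i, x i * zb (c.testBit i) := by
  induction n generalizing c with
  | zero => rfl
  | succ n ih =>
    rw [bl, List.ofFn_succ, bx, zb_xor, zb_and, zb_dec, Fin.sum_univ_succ, mul_comm]
    congr 1
    have := ih (fun i => x i.succ) (c / 2)
    rw [bl] at this
    rw [this]
    refine Finset.sum_congr rfl fun i _ => ?_
    rw [Fin.val_succ, Nat.testBit_succ]

theorem xsel_lt (us : List ℕ) (c : ℕ) (h : ∀ u ∈ us, u < 2) : xsel us c < 2 := by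
  induction us generalizing c with
  | nil => exact two_pos
  | cons u us ih =>
    change (c % 2 * u) ^^^ xsel us (c / 2) < 2 ^ 1
    refine Nat.xor_lt_two_pow ?_ (ih _ fun v hv => h v (by simp [hv]))
    have := h u (by simp)
    rcases Nat.mod_two_eq_zero_or_one c with h | h <;> rw [h] <;> omega

theorem half (on j : ℕ) (hon : on.testBit j = true) (U Cm TA TB : List ℕ)
    (y ta : Fin n → ZMod 2) (tb : Fin m → ZMod 2) (B : Matrix (Fin n) (Fin m) (ZMod 2))
    (hU : wd U j = bl y) (hC : Cm.length = m)
    (hB : ∀ k i, B k i = zb ((Cm.getD i 0).testBit k))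
    (hTA : wd TA 0 = bl ta) (hTA2 : ∀ u ∈ TA, u < 2)
    (hTB : wd TB 0 = bl tb) (hTB2 : ∀ u ∈ TB, u < 2) :
    wd (vrows on (lmap (xsel U) Cm) (offs Cm TA TB)) j = bl (tb + Matrix.vecMul (ta + y) B) := by
  have hTBl := (wd_eq_bl.mp hTB).1
  rw [wd_eq_bl]
  rw [vrows, offs, zipW_eq, zipW_eq, lmap_eq]
  refine ⟨by simp [hC, hTBl], fun i => ?_⟩
  have hi1 : (i : ℕ) < Cm.length := by rw [hC]; exact i.2
  have hi2 : (i : ℕ) < TB.length := by rw [hTBl]; exact i.2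
  rw [List.getD_eq_getElem _ _ (by simp [hC, hTBl]), List.getElem_zipWith, List.getElem_zipWith,
    List.getElem_map]
  change zb (Nat.testBit ((xsel U Cm[i]) ^^^ ((TB[i] ^^^ xsel TA Cm[i]) * on)) j) = _
  have hlt : TB[i] ^^^ xsel TA Cm[i] < 2 ^ 1 :=
    Nat.xor_lt_two_pow (hTB2 _ (List.getElem_mem _)) (xsel_lt _ _ hTA2)
  have hs : ∀ s : ℕ, s < 2 ^ 1 → (s * on).testBit j = s.testBit 0 := by
    intro s hs
    have : s = 0 ∨ s = 1 := by omega
    rcases this with rfl | rfl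
    · simp
    · simp [hon]
  rw [Nat.testBit_xor, hs _ hlt, Nat.testBit_xor, zb_xor, zb_xor, xsel_testBit, xsel_testBit, hU,
    hTA, zb_bx, zb_bx]
  have h3 := (wd_eq_bl.mp hTB).2 i
  rw [List.getD_eq_getElem _ _ hi2] at h3
  have h4 : ∀ k, B k i = zb (Cm[i].testBit k) := by
    intro k
    rw [hB, List.getD_eq_getElem _ _ hi1]
    rfl
  simp only [← h4]
  change _ + (zb (TB[(i : ℕ)].testBit 0) + _) = _
  rw [h3, Pi.add_apply, Matrix.add_vecMul, Pi.add_apply]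
  change _ + (_ + _) = tb i + ((∑ k, ta k * B k i) + ∑ k, y k * B k i)
  ring

/-! #### Enumerations of sets of vectors -/

/-- The words `0, …, c - 1` of `rows` are the vectors satisfying `Q`. -/
structure Enum (rows : List ℕ) (c : ℕ) (Q : (Fin n → ZMod 2) → Prop) : Prop where
  map : ∀ j < c, ∃ x, Q x ∧ wd rows j = bl x
  surj : ∀ x, Q x → ∃ j < c, wd rows j = bl x
  inj : ∀ i < c, ∀ j < c, wd rows i = wd rows j → i = j
  len : rows.length = n

theorem countP_range (N : ℕ) (p : ℕ → Bool) :
    (List.range N).countP p = ((Finset.range N).filter fun i => p i = true).card := by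
  rw [← List.toFinset_range, ← List.toFinset_filter,
    List.toFinset_card_of_nodup (List.Nodup.filter _ List.nodup_range),
    List.countP_eq_length_filter]

theorem on_testBit (c j : ℕ) : (Nat.sub (Nat.pow 2 c) 1).testBit j = decide (j < c) :=
  Nat.testBit_two_pow_sub_one c j

theorem Enum.min {rows : List ℕ} {c : ℕ} {Q : (Fin n → ZMod 2) → Prop} (h : Enum rows c Q)
    (hn : n < 64) {on : ℕ} (hon : ∀ j, on.testBit j = decide (j < c))
    (h0 : lowM on (cnt rows) = 0) (j : ℕ) (hj : j < c) :
    10 ≤ (wd rows j).count true := by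
  have := lowM_testBit on rows j (by rw [h.len]; exact hn)
    (by rw [hon]; simpa using hj)
  rw [h0, Nat.zero_testBit] at this
  have := of_decide_eq_false this.symm
  omega

theorem Enum.min' {rows : List ℕ} {c : ℕ} {Q : (Fin n → ZMod 2) → Prop} (h : Enum rows c Q)
    (hn : n < 64) {on : ℕ} (hon : ∀ j, on.testBit j = decide (j < c))
    (h0 : lowM on (cnt rows) = 0)
    (x : Fin n → ZMod 2) (hx : Q x) : 10 ≤ wt x := by
  obtain ⟨j, hj, hj'⟩ := h.surj x hx
  rw [wt_bl, ← hj']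
  exact h.min hn hon h0 j hj

open Classical in
theorem Enum.card {rows : List ℕ} {c : ℕ} {Q : (Fin n → ZMod 2) → Prop} (h : Enum rows c Q)
    (hn : n < 64) {on : ℕ} (hon : ∀ j, on.testBit j = decide (j < c))
    (h0 : lowM on (cnt rows) = 0) (N : ℕ) (hN : c ≤ N)
    (a b : Fin n) :
    (List.range N).countP (fun p => (tenM on (cnt rows)).testBit p &&
      (rows.getD a 0).testBit p && (rows.getD b 0).testBit p) =
    (Finset.univ.filter fun x : Fin n → ZMod 2 => Q x ∧ wt x = 10 ∧ x a ≠ 0 ∧ x b ≠ 0).card := by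
  rw [countP_range]
  have e : ∀ j, ((tenM on (cnt rows)).testBit j &&
      (rows.getD a 0).testBit j && (rows.getD b 0).testBit j) = true ↔
      j < c ∧ (wd rows j).count true = 10 ∧ (wd rows j).getD a false = true ∧
        (wd rows j).getD b false = true := by
    intro j
    rw [tenM_testBit _ rows j (by rw [h.len]; exact hn), hon, wd_getD, wd_getD]
    · simp [and_assoc]
    · intro hj
      rw [hon, decide_eq_true_eq] at hj
      exact h.min hn hon h0 j hj
  simp only [e]
  rw [← Finset.card_image_of_injOn (f := wd rows), ← Finset.card_image_of_injective _
    (fun _ _ => bl_inj : Function.Injective (bl (n := n)))]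
  · congr 1
    ext w
    simp only [Finset.mem_image, Finset.mem_filter, Finset.mem_range, Finset.mem_univ, true_and]
    constructor
    · rintro ⟨j, ⟨_, hj, h1, h2, h3⟩, rfl⟩
      obtain ⟨x, hx, hx'⟩ := h.map j hj
      rw [hx'] at h1 h2 h3
      rw [bl_getD] at h2 h3
      exact ⟨x, ⟨hx, by rw [wt_bl, h1], of_decide_eq_true h2, of_decide_eq_true h3⟩, hx'.symm⟩
    · rintro ⟨x, ⟨hx, h1, h2, h3⟩, rfl⟩
      obtain ⟨j, hj, hj'⟩ := h.surj x hx
      refine ⟨j, ⟨by omega, hj, ?_⟩, hj'⟩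
      rw [hj', bl_getD, bl_getD, ← wt_bl]
      exact ⟨h1, decide_eq_true h2, decide_eq_true h3⟩
  · intro i hi j hj hij
    simp only [Finset.coe_filter, Set.mem_ofPred_eq] at hi hj
    exact h.inj i hi.2.1 j hj.2.1 hij

/-! #### The code with generator matrix `(1, A)` -/

/-- Left half. -/
def lf (x : Fin (m + m) → ZMod 2) : Fin m → ZMod 2 := fun i => x (Fin.castAdd m i)
/-- Right half. -/
def rt (x : Fin (m + m) → ZMod 2) : Fin m → ZMod 2 := fun i => x (Fin.natAdd m i)

theorem append_lf_rt (x : Fin (m + m) → ZMod 2) : Fin.append (lf x) (rt x) = x :=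
  Fin.append_castAdd_natAdd

theorem lf_append (y z : Fin m → ZMod 2) : lf (Fin.append y z) = y := by
  funext i; simp [lf]
theorem rt_append (y z : Fin m → ZMod 2) : rt (Fin.append y z) = z := by
  funext i; exact Fin.append_right y z i
theorem lf_add (x y : Fin (m + m) → ZMod 2) : lf (x + y) = lf x + lf y := rfl
theorem rt_add (x y : Fin (m + m) → ZMod 2) : rt (x + y) = rt x + rt y := rfl

theorem wt_lf_rt (x : Fin (m + m) → ZMod 2) : wt x = wt (lf x) + wt (rt x) := by
  rw [wt_bl (lf x), wt_bl (rt x), ← List.count_append, ← bl_append, append_lf_rt, wt_bl]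

theorem ip_lf_rt (x y : Fin (m + m) → ZMod 2) :
    ip x y = lf x ⬝ᵥ lf y + rt x ⬝ᵥ rt y := by
  rw [ip, Fin.sum_univ_add]; rfl

/-- The code with generator matrix `(1, A)`. -/
def Dc (A : Matrix (Fin m) (Fin m) (ZMod 2)) : Submodule (ZMod 2) (Fin (m + m) → ZMod 2) where
  carrier := {x | rt x = Matrix.vecMul (lf x) A}
  zero_mem' := (Matrix.zero_vecMul A).symm
  add_mem' := by
    intro a b ha hb
    change rt a + rt b = Matrix.vecMul (lf a + lf b) A
    rw [Matrix.add_vecMul, ← ha, ← hb]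
  smul_mem' := by
    intro c a ha
    change c • rt a = Matrix.vecMul (c • lf a) A
    rw [Matrix.smul_vecMul, ← ha]

variable {A : Matrix (Fin m) (Fin m) (ZMod 2)}

theorem mem_Dc {x : Fin (m + m) → ZMod 2} : x ∈ Dc A ↔ rt x = Matrix.vecMul (lf x) A := Iff.rfl

theorem mem_Dc' (hA : A * A.transpose = 1) {x : Fin (m + m) → ZMod 2} :
    x ∈ Dc A ↔ lf x = Matrix.vecMul (rt x) A.transpose := by
  rw [mem_Dc]
  have hA' := mul_eq_one_comm.mp hA
  constructor
  · intro h
    rw [h, Matrix.vecMul_vecMul, hA, Matrix.vecMul_one]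
  · intro h
    rw [h, Matrix.vecMul_vecMul, hA', Matrix.vecMul_one]

theorem shift_eq (a b c : Fin m → ZMod 2) : a + b = c ↔ a = b + c := by
  constructor
  · rintro rfl
    rw [add_left_comm, add_self, add_zero]
  · rintro rfl
    rw [add_right_comm, add_self, zero_add]

theorem coset_L {x t : Fin (m + m) → ZMod 2} :
    x + t ∈ Dc A ↔ rt x = rt t + Matrix.vecMul (lf t + lf x) A := by
  rw [mem_Dc, lf_add, rt_add, shift_eq, add_comm (lf x)]

theorem coset_R (hA : A * A.transpose = 1) {x t : Fin (m + m) → ZMod 2} :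
    x + t ∈ Dc A ↔ lf x = lf t + Matrix.vecMul (rt t + rt x) A.transpose := by
  rw [mem_Dc' hA, lf_add, rt_add, shift_eq, add_comm (rt x)]

/-- Rows of the generator matrix. -/
def gen (A : Matrix (Fin m) (Fin m) (ZMod 2)) (k : Fin m) : Fin (m + m) → ZMod 2 :=
  Fin.append (Pi.single k 1) (A k)

theorem gen_mem (k : Fin m) : gen A k ∈ Dc A := by
  rw [mem_Dc, gen, lf_append, rt_append, Matrix.single_one_vecMul]
  rfl

theorem Dc_orth (hA : A * A.transpose = 1) (x y : Fin (m + m) → ZMod 2) (hx : x ∈ Dc A)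
    (hy : y ∈ Dc A) : ip x y = 0 := by
  rw [ip_lf_rt]
  have h : rt x ⬝ᵥ rt y = lf x ⬝ᵥ lf y := by
    rw [mem_Dc.mp hx, ← Matrix.dotProduct_mulVec, (mem_Dc' hA).mp hy, Matrix.vecMul_transpose]
  rw [h]
  exact CharTwo.add_self_eq_zero _

theorem ip_gen (x : Fin (m + m) → ZMod 2) (k : Fin m) :
    ip x (gen A k) = lf x k + Matrix.mulVec A (rt x) k := by
  rw [ip_lf_rt, gen, lf_append, rt_append, dotProduct_single_one, dotProduct_comm]
  rfl

theorem Dc_dual_gen (hA : A * A.transpose = 1) (x : Fin (m + m) → ZMod 2)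
    (h : ∀ k, ip x (gen A k) = 0) : x ∈ Dc A := by
  rw [mem_Dc' hA, Matrix.vecMul_transpose]
  funext k
  have := h k
  rw [ip_gen] at this
  exact CharTwo.add_eq_zero.mp this

theorem Dc_sum (x : Fin (m + m) → ZMod 2) (hx : x ∈ Dc A) : x = ∑ k, lf x k • gen A k := by
  rw [← append_lf_rt x, lf_append, mem_Dc.mp hx]
  funext i
  refine Fin.addCases (fun i => ?_) (fun i => ?_) i
  · simp [gen, Finset.sum_apply, Pi.single_apply]
  · rw [Fin.append_right, Finset.sum_apply]
    simp only [gen, Pi.smul_apply, Fin.append_right]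
    rfl

theorem Dc_even (hA : A * A.transpose = 1) (hg : ∀ k, wt (gen A k) = 12)
    (x : Fin (m + m) → ZMod 2) (hx : x ∈ Dc A) : 4 ∣ wt x := by
  have key : ∀ s : Finset (Fin m), 4 ∣ wt (∑ k ∈ s, lf x k • gen A k) := by
    intro s
    induction s using Finset.induction_on with
    | empty => rw [Finset.sum_empty, wt_zero]; exact dvd_zero 4
    | insert k s hk ih =>
      rw [Finset.sum_insert hk]
      rcases z2 (lf x k) with h | h
      · rw [h, zero_smul, zero_add]; exact ih
      · rw [h, one_smul]
        have h1 := wt_add_even (x := gen A k) (y := ∑ k ∈ s, lf x k • gen A k)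
          (Dc_orth hA _ _ (gen_mem k)
            (Submodule.sum_mem _ fun k _ => Submodule.smul_mem _ _ (gen_mem k)))
          (by rw [hg]; norm_num)
        omega
  rw [Dc_sum x hx]
  exact key _

theorem Dc_DE (hA : A * A.transpose = 1) (hg : ∀ k, wt (gen A k) = 12)
    (hlow : ∀ x ∈ Dc A, x ≠ 0 → 10 ≤ wt x) : DE (Dc A) where
  orth := fun x hx y hy => Dc_orth hA x y hx hy
  dual := fun x h => Dc_dual_gen hA x fun k => h _ (gen_mem k)
  even := Dc_even hA hg
  low := by
    intro x hx h0
    have h1 := hlow x hx h0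
    have h2 := Dc_even hA hg x hx
    omega

theorem Dc_exists (hA : A * A.transpose = 1) (hg : ∀ k, wt (gen A k) = 12)
    (hD : DE (Dc A)) {t : Fin (m + m) → ZMod 2} (ht : CL (Dc A) t) :
    ∃ d ∈ Dc A, wt d = 12 ∧ ip d t = 1 := by
  by_contra hc
  push Not at hc
  refine t_not_mem hD ht (Dc_dual_gen hA t fun k => ?_)
  rw [ip_comm]
  exact (z2 _).resolve_right (hc _ (gen_mem k) (hg k))

end words

end SX

namespace SX

/-! ### Part 4: the two enumerations of a coset -/

section cosets
variable {m r : ℕ} {A : Matrix (Fin m) (Fin m) (ZMod 2)}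

theorem half_exists {E : ℕ × List ℕ} (hE : Good m r E) (j : ℕ) (hj : j < E.1) :
    ∃ y : Fin m → ZMod 2, wd E.2 j = bl y ∧ wt y ≤ r := by
  obtain ⟨y, hy⟩ := exists_bl (n := m) (wd E.2 j) (by rw [wd_length, hE.len])
  refine ⟨y, hy, ?_⟩
  rw [wt_bl, ← hy]
  exact hE.le j hj

theorem vrows_length (on : ℕ) (U Cm TA TB : List ℕ) (hC : Cm.length = m) (hT : TB.length = m) :
    (vrows on (lmap (xsel U) Cm) (offs Cm TA TB)).length = m := by
  rw [vrows, offs, zipW_eq, zipW_eq, lmap_eq]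
  simp [hC, hT]

theorem enumL {E : ℕ × List ℕ} (hE : Good m r E) {on : ℕ}
    (hon : ∀ j, on.testBit j = decide (j < E.1)) (Cm TL TR : List ℕ) (t : Fin (m + m) → ZMod 2)
    (hC : Cm.length = m) (hB : ∀ k i, A k i = zb ((Cm.getD i 0).testBit k))
    (hTL : wd TL 0 = bl (lf t)) (hTL2 : ∀ u ∈ TL, u < 2)
    (hTR : wd TR 0 = bl (rt t)) (hTR2 : ∀ u ∈ TR, u < 2) :
    Enum (app E.2 (vrows on (lmap (xsel E.2) Cm) (offs Cm TL TR))) E.1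
      (fun x => x + t ∈ Dc A ∧ wt (lf x) ≤ r) := by
  have key : ∀ j < E.1, ∀ y : Fin m → ZMod 2, wd E.2 j = bl y →
      wd (app E.2 (vrows on (lmap (xsel E.2) Cm) (offs Cm TL TR))) j =
        bl (Fin.append y (rt t + Matrix.vecMul (lf t + y) A)) := by
    intro j hj y hy
    rw [app_eq, wd_append, bl_append, hy]
    rw [half _ j (by rw [hon]; exact decide_eq_true hj) E.2 Cm TL TR y (lf t) (rt t) A hy hC
      hB hTL hTL2 hTR hTR2]
  refine ⟨?_, ?_, ?_, ?_⟩
  · intro j hj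
    obtain ⟨y, hy, hr⟩ := half_exists hE j hj
    refine ⟨_, ⟨?_, ?_⟩, key j hj y hy⟩
    · rw [coset_L, lf_append, rt_append]
    · rwa [lf_append]
  · rintro x ⟨hx, hr⟩
    obtain ⟨j, hj, hj'⟩ := hE.surj (bl (lf x)) (bl_length _) (by rwa [← wt_bl])
    refine ⟨j, hj, ?_⟩
    rw [key j hj _ hj', ← coset_L.mp hx, append_lf_rt]
  · intro i hi j hj h
    refine hE.inj i hi j hj ?_
    rw [app_eq, wd_append, wd_append] at h
    exact (List.append_inj h (by rw [wd_length, wd_length])).1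
  · rw [app_eq, List.length_append, hE.len,
      vrows_length _ _ _ _ _ hC (wd_eq_bl.mp hTR).1]

theorem enumR (hA : A * A.transpose = 1) {E : ℕ × List ℕ} (hE : Good m r E) {on : ℕ}
    (hon : ∀ j, on.testBit j = decide (j < E.1)) (Cm TL TR : List ℕ)
    (t : Fin (m + m) → ZMod 2)
    (hC : Cm.length = m) (hB : ∀ k i, A.transpose k i = zb ((Cm.getD i 0).testBit k))
    (hTL : wd TL 0 = bl (lf t)) (hTL2 : ∀ u ∈ TL, u < 2)
    (hTR : wd TR 0 = bl (rt t)) (hTR2 : ∀ u ∈ TR, u < 2) :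
    Enum (app (vrows on (lmap (xsel E.2) Cm) (offs Cm TR TL)) E.2) E.1
      (fun x => x + t ∈ Dc A ∧ wt (rt x) ≤ r) := by
  have key : ∀ j < E.1, ∀ y : Fin m → ZMod 2, wd E.2 j = bl y →
      wd (app (vrows on (lmap (xsel E.2) Cm) (offs Cm TR TL)) E.2) j =
        bl (Fin.append (lf t + Matrix.vecMul (rt t + y) A.transpose) y) := by
    intro j hj y hy
    rw [app_eq, wd_append, bl_append, hy]
    rw [half _ j (by rw [hon]; exact decide_eq_true hj) E.2 Cm TR TL y (rt t) (lf t)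
      A.transpose hy hC hB hTR hTR2 hTL hTL2]
  have hl := vrows_length on E.2 Cm TR TL hC (wd_eq_bl.mp hTL).1
  refine ⟨?_, ?_, ?_, ?_⟩
  · intro j hj
    obtain ⟨y, hy, hr⟩ := half_exists hE j hj
    refine ⟨_, ⟨?_, ?_⟩, key j hj y hy⟩
    · rw [coset_R hA, lf_append, rt_append]
    · rwa [rt_append]
  · rintro x ⟨hx, hr⟩
    obtain ⟨j, hj, hj'⟩ := hE.surj (bl (rt x)) (bl_length _) (by rwa [← wt_bl])
    refine ⟨j, hj, ?_⟩
    rw [key j hj _ hj', ← (coset_R hA).mp hx, append_lf_rt]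
  · intro i hi j hj h
    refine hE.inj i hi j hj ?_
    rw [app_eq, wd_append, wd_append] at h
    exact (List.append_inj h (by rw [wd_length, wd_length])).2
  · rw [app_eq, List.length_append, hE.len, hl]

theorem orAll_testBit (l : List ℕ) (u j : ℕ) (hu : u ∈ l) (h : u.testBit j = true) :
    (orAll l).testBit j = true := by
  induction l with
  | nil => simp at hu
  | cons a l ih =>
    change Nat.testBit (a ||| orAll l) j = true
    rw [Nat.testBit_or]
    rcases List.mem_cons.mp hu with rfl | hu
    · simp [h]
    · simp [ih hu]

theorem orAll_bl (l : List ℕ) (j : ℕ) (y : Fin m → ZMod 2) (h : wd l j = bl y) (hy : y ≠ 0) :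
    (orAll l).testBit j = true := by
  obtain ⟨i, hi⟩ := Function.ne_iff.mp hy
  obtain ⟨h1, h2⟩ := wd_eq_bl.mp h
  have hil : (i : ℕ) < l.length := by rw [h1]; exact i.2
  refine orAll_testBit l (l.getD i 0) j ?_ ?_
  · rw [List.getD_eq_getElem _ _ hil]
    exact List.getElem_mem _
  · rw [← wd_getD, h, bl_getD]
    exact decide_eq_true hi

theorem Enum.low {n : ℕ} {rows : List ℕ} {c : ℕ} {Q : (Fin n → ZMod 2) → Prop}
    (h : Enum rows c Q) (hn : n < 64) (M : ℕ) {on : ℕ}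
    (hon : ∀ j, on.testBit j = decide (j < c))
    (h0 : Nat.land M (lowM on (cnt rows)) = 0) (x : Fin n → ZMod 2)
    (hx : Q x) (hM : ∀ j, wd rows j = bl x → M.testBit j = true) : 10 ≤ wt x := by
  obtain ⟨j, hj, hj'⟩ := h.surj x hx
  have h1 := lowM_testBit on rows j (by rw [h.len]; exact hn)
    (by rw [hon]; exact decide_eq_true hj)
  have h2 : (Nat.land M (lowM on (cnt rows))).testBit j =
    (M.testBit j && (lowM on (cnt rows)).testBit j) := Nat.testBit_and _ _ _
  rw [h0, Nat.zero_testBit, hM j hj', h1, Bool.true_and] at h2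
  have h3 := of_decide_eq_false h2.symm
  rw [wt_bl, ← hj']
  omega

end cosets

theorem bits_spec (n m : ℕ) :
    wd (bits n m) 0 = bl (fun i : Fin n => zb (m.testBit i)) ∧ ∀ u ∈ bits n m, u < 2 := by
  induction n generalizing m with
  | zero => exact ⟨rfl, by intro u hu; exact absurd hu (by simp [bits])⟩
  | succ n ih =>
    have e : bits (n + 1) m = m % 2 :: bits n (m / 2) := rfl
    obtain ⟨h1, h2⟩ := ih (m / 2)
    rw [e]
    constructor
    · rw [wd_cons, h1, bl, bl, List.ofFn_succ]
      simp only [dec_zb]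
      congr 1
      · simp
      · congr 1
        funext i
        rw [Fin.val_succ, Nat.testBit_succ]
    · intro u hu
      rcases List.mem_cons.mp hu with rfl | hu
      · exact Nat.mod_lt _ two_pos
      · exact h2 u hu

/-- The vector given by the binary digits of `t`. -/
def tv (t : ℕ) : Fin (28 + 28) → ZMod 2 :=
  Fin.append (fun i => zb (t.testBit i)) (fun i => zb ((t >>> 28).testBit i))

/-- The matrix `A`. -/
def matA : Matrix (Fin 28) (Fin 28) (ZMod 2) := fun k i => zb ((rowsA.getD k 0).testBit i)

theorem colsA_rowsA : ∀ k i : Fin 28,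
    (colsA.getD i 0).testBit k = (rowsA.getD k 0).testBit i := by decide +kernel

theorem matA_mul : matA * matA.transpose = 1 := by
  have h : ∀ k l : Fin 28, bx (bl (matA k)) (rowsA.getD l 0) = decide (k = l) := by decide +kernel
  ext k l
  have h1 := congrArg zb (h k l)
  rw [zb_bx] at h1
  rw [Matrix.mul_apply, Matrix.one_apply]
  change ∑ i, matA k i * zb ((rowsA.getD l 0).testBit i) = _
  rw [h1]
  by_cases hkl : k = l <;> simp [hkl, zb]

theorem matA_gen : ∀ k, wt (gen matA k) = 12 := by
  have h : ∀ k, (bl (gen matA k)).count true = 12 := by decide +kernel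
  intro k
  rw [wt_bl, h]

theorem rowsA_length : rowsA.length = 28 := rfl
theorem colsA_length : colsA.length = 28 := rfl

/-- The doubly even code. -/
def codeD : Submodule (ZMod 2) (Fin (28 + 28) → ZMod 2) := Dc matA

theorem tv_L (t : ℕ) : wd (bits 28 t) 0 = bl (lf (tv t)) ∧ ∀ u ∈ bits 28 t, u < 2 := by
  rw [tv, lf_append]
  exact bits_spec 28 t

theorem tv_R (t : ℕ) : wd (bits 28 (Nat.shiftRight t 28)) 0 = bl (rt (tv t)) ∧
    ∀ u ∈ bits 28 (Nat.shiftRight t 28), u < 2 := by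
  rw [tv, rt_append]
  exact bits_spec 28 _

theorem onOf_testBit (c j : ℕ) : (onOf c).testBit j = decide (j < c) := by
  rw [onOf]; exact on_testBit c j

attribute [irreducible] E5 E4 onOf

theorem on5_testBit (j : ℕ) : on5.testBit j = decide (j < E5.1) := by
  rw [on5]; exact onOf_testBit E5.1 j

theorem on4_testBit (j : ℕ) : on4.testBit j = decide (j < E4.1) := by
  rw [on4]; exact onOf_testBit E4.1 j

attribute [irreducible] on5 on4

theorem enum5 (t : ℕ) : Enum (rowsL (bits 28 t) (bits 28 (Nat.shiftRight t 28))) E5.1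
    (fun x => x + tv t ∈ codeD ∧ wt (lf x) ≤ 5) := by
  rw [rowsL, V5]
  exact enumL good_E5 on5_testBit colsA _ _ (tv t) colsA_length
    (fun k i => by rw [colsA_rowsA]; rfl) (tv_L t).1 (tv_L t).2 (tv_R t).1 (tv_R t).2

theorem enum4 (t : ℕ) : Enum (rowsR (bits 28 t) (bits 28 (Nat.shiftRight t 28))) E4.1
    (fun x => x + tv t ∈ codeD ∧ wt (rt x) ≤ 4) := by
  rw [rowsR, V4]
  exact enumR matA_mul good_E4 on4_testBit rowsA _ _ (tv t) rowsA_length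
    (fun _ _ => rfl) (tv_L t).1 (tv_L t).2 (tv_R t).1 (tv_R t).2

theorem tv_zero : tv 0 = 0 := by
  funext i
  refine Fin.addCases (fun i => ?_) (fun i => ?_) i
  · rw [tv, Fin.append_left]
    simp [zb]
  · rw [tv, Fin.append_right]
    simp [zb]

theorem codeD_low (h : chkD = true) (x : Fin (28 + 28) → ZMod 2) (hx : x ∈ codeD) (h0 : x ≠ 0) :
    10 ≤ wt x := by
  rw [chkD, Bool.and_eq_true] at h
  have hL := Nat.eq_of_beq_eq_true h.1
  have hR := Nat.eq_of_beq_eq_true h.2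
  have hl : lf x ≠ 0 := by
    intro h1
    apply h0
    have h2 := mem_Dc.mp hx
    rw [h1, Matrix.zero_vecMul] at h2
    rw [← append_lf_rt x, h1, h2]
    funext i
    refine Fin.addCases (fun i => ?_) (fun i => ?_) i
    · rw [Fin.append_left]; rfl
    · rw [Fin.append_right]; rfl
  have hr : rt x ≠ 0 := by
    intro h1
    apply hl
    have h2 := (mem_Dc' matA_mul).mp hx
    rw [h1, Matrix.zero_vecMul] at h2
    exact h2
  have hx0 : x + tv 0 ∈ codeD := by rw [tv_zero, add_zero]; exact hx
  have e0 : Nat.shiftRight 0 28 = 0 := Nat.zero_shiftRight 28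
  have h5 := enum5 0
  have h4 := enum4 0
  rw [e0] at h5 h4
  by_cases h6 : wt (lf x) ≤ 5
  · refine h5.low (by norm_num) _ on5_testBit hL x ⟨hx0, h6⟩ fun j hj => ?_
    refine orAll_bl E5.2 j (lf x) ?_ hl
    rw [← append_lf_rt x, bl_append, rowsL, app_eq, wd_append] at hj
    exact (List.append_inj hj (by rw [wd_length, bl_length, good_E5.len])).1
  · by_cases h7 : wt (rt x) ≤ 4
    · refine h4.low (by norm_num) _ on4_testBit hR x ⟨hx0, h7⟩ fun j hj => ?_
      refine orAll_bl E4.2 j (rt x) ?_ hr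
      rw [← append_lf_rt x, bl_append, rowsR, app_eq, wd_append] at hj
      exact (List.append_inj' hj (by rw [wd_length, bl_length, good_E4.len])).2
    · have := wt_lf_rt x
      omega

theorem chkF_spec {RL RR csL csR : List ℕ} {F : ℕ} (h : chkF RL RR csL csR F = true) :
    lowM on5 csL = 0 ∧ lowM on4 csR = 0 ∧
    sumsq (List.zipWith (fun a b => pkB (pkB 0 (blocks 6 (tenM on4 csR)) b)
      (blocks 30 (tenM on5 csL)) a) RL RR) = F := by
  rw [chkF] at h
  cases h1 : Nat.beq (lowM on5 csL) 0 with
  | false => rw [h1] at h; exact absurd h (by simp)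
  | true =>
    cases h2 : Nat.beq (lowM on4 csR) 0 with
    | false => rw [h1, h2] at h; exact absurd h (by simp)
    | true =>
      rw [h1, h2, cond_true, cond_true, invF, frcLL_eq, frcLL_eq, zipW_eq] at h
      exact ⟨Nat.eq_of_beq_eq_true h1, Nat.eq_of_beq_eq_true h2, Nat.eq_of_beq_eq_true h⟩

theorem E5_le : E5.1 ≤ 4096 * 30 := by
  have : Nat.ble E5.1 122880 = true := by decide +kernel
  exact Nat.le_of_ble_eq_true this

theorem E4_le : E4.1 ≤ 4096 * 6 := by
  have : Nat.ble E4.1 24576 = true := by decide +kernel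
  exact Nat.le_of_ble_eq_true this

theorem chkP_min {p : ℕ × ℕ} (h : chkP p = true) (x : Fin (28 + 28) → ZMod 2)
    (hx : x + tv p.1 ∈ codeD) : 10 ≤ wt x := by
  obtain ⟨h1, h2, -⟩ := chkF_spec h
  by_cases h6 : wt (lf x) ≤ 5
  · exact (enum5 p.1).min' (by norm_num) on5_testBit h1 x ⟨hx, h6⟩
  · by_cases h7 : wt (rt x) ≤ 4
    · exact (enum4 p.1).min' (by norm_num) on4_testBit h2 x ⟨hx, h7⟩
    · have := wt_lf_rt x
      omega

theorem getD_zipWith (f : ℕ → ℕ → ℕ) (l l' : List ℕ) (i : ℕ) (h : i < l.length)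
    (h' : i < l'.length) : (List.zipWith f l l').getD i 0 = f (l.getD i 0) (l'.getD i 0) := by
  rw [List.getD_eq_getElem _ _ (by simp [h, h']), List.getElem_zipWith,
    List.getD_eq_getElem _ _ h, List.getD_eq_getElem _ _ h']

set_option linter.constructorNameAsVariable false in
open Classical in
theorem chkP_sum {p : ℕ × ℕ} (h : chkP p = true) :
    (∑ a : Fin (28 + 28), ∑ b : Fin (28 + 28),
      ((Finset.univ.filter fun x : Fin (28 + 28) → ZMod 2 =>
        x + tv p.1 ∈ codeD ∧ wt x = 10 ∧ x a ≠ 0 ∧ x b ≠ 0).card % 511) ^ 2) = p.2 := by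
  obtain ⟨h1, h2, h3⟩ := chkF_spec h
  have e5 := enum5 p.1
  have e4 := enum4 p.1
  rw [← h3, sumsq_eq (m := 28 + 28) _ (by rw [List.length_zipWith, e5.len, e4.len, min_self])]
  refine Finset.sum_congr rfl fun a _ => Finset.sum_congr rfl fun b _ => ?_
  have hl : ∀ i : Fin (28 + 28), (i : ℕ) <
      (rowsL (bits 28 p.1) (bits 28 (Nat.shiftRight p.1 28))).length := by
    intro i; rw [e5.len]; exact i.2
  have hr : ∀ i : Fin (28 + 28), (i : ℕ) <
      (rowsR (bits 28 p.1) (bits 28 (Nat.shiftRight p.1 28))).length := by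
    intro i; rw [e4.len]; exact i.2
  rw [getD_zipWith _ _ _ _ (hl a) (hr a), getD_zipWith _ _ _ _ (hl b) (hr b)]
  rw [pkB_land, Nat.add_mod, pkB_land, ← Nat.add_mod, Nat.zero_and, add_zero]
  have c5 := e5.card (by norm_num) on5_testBit h1 _ E5_le a b
  have c4 := e4.card (by norm_num) on4_testBit h2 _ E4_le a b
  rw [c5, c4]
  rw [← Finset.card_union_of_disjoint]
  · refine congrArg (fun s : Finset (Fin (28 + 28) → ZMod 2) => (s.card % 511) ^ 2) ?_
    ext x
    simp only [Finset.mem_union, Finset.mem_filter, Finset.mem_univ, true_and]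
    have := wt_lf_rt x
    constructor
    · rintro ⟨hx, hw, hab⟩
      by_cases h6 : wt (lf x) ≤ 5
      · exact Or.inl ⟨⟨hx, h6⟩, hw, hab⟩
      · exact Or.inr ⟨⟨hx, by omega⟩, hw, hab⟩
    · rintro (⟨⟨hx, _⟩, hw, hab⟩ | ⟨⟨hx, _⟩, hw, hab⟩)
      · exact ⟨hx, hw, hab⟩
      · exact ⟨hx, hw, hab⟩
  · rw [Finset.disjoint_left]
    intro x hx hx'
    simp only [Finset.mem_filter, Finset.mem_univ, true_and] at hx hx'
    have := wt_lf_rt x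
    omega

/-! ### Part 5: the 92 codes -/

theorem dat_length : dat.length = 92 := rfl

theorem dat_wt : (dat.all fun p => Nat.beq ((wd (bits 28 p.1) 0 ++
    wd (bits 28 (Nat.shiftRight p.1 28)) 0).count true) 10) = true := by decide +kernel

theorem dat_nodup : (dat.map fun p => p.2).Nodup := by decide +kernel

theorem chk_get {a n : ℕ} (h : chkRange a n = true) (i : ℕ) (hi : i < dat.length) (h1 : a ≤ i)
    (h2 : i < a + n) : chkP dat[i] = true := by
  refine List.all_eq_true.mp h _ ?_
  rw [List.mem_iff_getElem]
  refine ⟨i - a, by simp; omega, ?_⟩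
  rw [List.getElem_take, List.getElem_drop]
  congr 1
  omega

theorem tv_CL {p : ℕ × ℕ} (hp : p ∈ dat) (h : chkP p = true) : CL codeD (tv p.1) where
  ten := by
    have := Nat.eq_of_beq_eq_true (List.all_eq_true.mp dat_wt p hp)
    rw [(tv_L p.1).1, (tv_R p.1).1, ← bl_append, append_lf_rt, ← wt_bl] at this
    exact this
  min := chkP_min h

theorem codeD_DE (h : chkD = true) : DE codeD := Dc_DE matA_mul matA_gen (codeD_low h)

theorem inv_nb (hD : chkD = true) {p : ℕ × ℕ} (hp : p ∈ dat) (h : chkP p = true) :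
    inv (nb codeD (tv p.1)) = p.2 := by
  classical
  rw [← chkP_sum h]
  refine Finset.sum_congr rfl fun a _ => Finset.sum_congr rfl fun b _ => ?_
  rw [deg]
  refine congrArg (fun s : Finset (Fin (28 + 28) → ZMod 2) => (s.card % 511) ^ 2) ?_
  ext x
  simp only [Finset.mem_filter, Finset.mem_univ, true_and]
  constructor
  · rintro ⟨h1, h2, h3⟩
    exact ⟨(mem_nb_ten (codeD_DE hD) (tv_CL hp h) x h2).mp h1, h2, h3⟩
  · rintro ⟨h1, h2, h3⟩
    exact ⟨(mem_nb_ten (codeD_DE hD) (tv_CL hp h) x h2).mpr h1, h2, h3⟩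

theorem final (hD : chkD = true) (hC : ∀ i (hi : i < dat.length), chkP dat[i] = true) :
    ∃ f : Fin 92 → Submodule (ZMod 2) (Fin (28 + 28) → ZMod 2),
      (∀ i, IsSinglyEvenSelfDual (f i) ∧
        Module.finrank (ZMod 2) (f i) = 28 ∧
        minWt (f i) = 10 ∧
        minWtSet (shadow (f i)) = 12) ∧
      ∀ i j, i ≠ j → ¬ CodeEquiv (f i) (f j) := by
  have hlt : ∀ i : Fin 92, (i : ℕ) < dat.length := fun i => by rw [dat_length]; exact i.2
  have hDE := codeD_DE hD
  have hm : ∀ i : Fin 92, dat.get ⟨i, hlt i⟩ ∈ dat := fun i => List.getElem_mem _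
  have hCL : ∀ i : Fin 92, CL codeD (tv (dat.get ⟨i, hlt i⟩).1) :=
    fun i => tv_CL (hm i) (hC i (hlt i))
  refine ⟨fun i => nb codeD (tv (dat.get ⟨i, hlt i⟩).1), fun i => ⟨nb_singlyEven hDE (hCL i), ?_,
    nb_minWt hDE (hCL i), nb_shadow_min hDE (hCL i) (Dc_exists matA_mul matA_gen hDE (hCL i))⟩, ?_⟩
  · have := selfDual_finrank (nb_selfDual hDE (hCL i))
    change Module.finrank (ZMod 2) (nb codeD (tv (dat.get ⟨i, hlt i⟩).1)) = 28
    omega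
  · intro i j hij he
    have h1 := inv_equiv he
    rw [inv_nb hD (hm i) (hC i (hlt i)), inv_nb hD (hm j) (hC j (hlt j))] at h1
    apply hij
    have h2 := (List.Nodup.getElem_inj_iff dat_nodup (i := i) (j := j)
      (hi := by rw [List.length_map]; exact hlt i) (hj := by rw [List.length_map]; exact hlt j)).mp
      (by rw [List.getElem_map, List.getElem_map]; exact h1)
    exact Fin.ext h2

end SX

namespace SX

/-! ### The kernel computations -/

theorem chkD_true : chkD = true := by decide +kernel

theorem chk_0 : chkRange 0 4 = true := by decide +kernel
theorem chk_1 : chkRange 4 4 = true := by decide +kernel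
theorem chk_2 : chkRange 8 4 = true := by decide +kernel
theorem chk_3 : chkRange 12 4 = true := by decide +kernel
theorem chk_4 : chkRange 16 4 = true := by decide +kernel
theorem chk_5 : chkRange 20 4 = true := by decide +kernel
theorem chk_6 : chkRange 24 4 = true := by decide +kernel
theorem chk_7 : chkRange 28 4 = true := by decide +kernel
theorem chk_8 : chkRange 32 4 = true := by decide +kernel
theorem chk_9 : chkRange 36 4 = true := by decide +kernel
theorem chk_10 : chkRange 40 4 = true := by decide +kernel
theorem chk_11 : chkRange 44 4 = true := by decide +kernel
theorem chk_12 : chkRange 48 4 = true := by decide +kernel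
theorem chk_13 : chkRange 52 4 = true := by decide +kernel
theorem chk_14 : chkRange 56 4 = true := by decide +kernel
theorem chk_15 : chkRange 60 4 = true := by decide +kernel
theorem chk_16 : chkRange 64 4 = true := by decide +kernel
theorem chk_17 : chkRange 68 4 = true := by decide +kernel
theorem chk_18 : chkRange 72 4 = true := by decide +kernel
theorem chk_19 : chkRange 76 4 = true := by decide +kernel
theorem chk_20 : chkRange 80 4 = true := by decide +kernel
theorem chk_21 : chkRange 84 4 = true := by decide +kernel
theorem chk_22 : chkRange 88 4 = true := by decide +kernel

theorem all_chk (i : ℕ) (hi : i < dat.length) : chkP dat[i] = true := by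
  have h92 : i < 92 := hi
  by_cases h0 : i < 4
  · exact chk_get chk_0 i hi (by omega) (by omega)
  by_cases h1 : i < 8
  · exact chk_get chk_1 i hi (by omega) (by omega)
  by_cases h2 : i < 12
  · exact chk_get chk_2 i hi (by omega) (by omega)
  by_cases h3 : i < 16
  · exact chk_get chk_3 i hi (by omega) (by omega)
  by_cases h4 : i < 20
  · exact chk_get chk_4 i hi (by omega) (by omega)
  by_cases h5 : i < 24
  · exact chk_get chk_5 i hi (by omega) (by omega)
  by_cases h6 : i < 28
  · exact chk_get chk_6 i hi (by omega) (by omega)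
  by_cases h7 : i < 32
  · exact chk_get chk_7 i hi (by omega) (by omega)
  by_cases h8 : i < 36
  · exact chk_get chk_8 i hi (by omega) (by omega)
  by_cases h9 : i < 40
  · exact chk_get chk_9 i hi (by omega) (by omega)
  by_cases h10 : i < 44
  · exact chk_get chk_10 i hi (by omega) (by omega)
  by_cases h11 : i < 48
  · exact chk_get chk_11 i hi (by omega) (by omega)
  by_cases h12 : i < 52
  · exact chk_get chk_12 i hi (by omega) (by omega)
  by_cases h13 : i < 56
  · exact chk_get chk_13 i hi (by omega) (by omega)
  by_cases h14 : i < 60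
  · exact chk_get chk_14 i hi (by omega) (by omega)
  by_cases h15 : i < 64
  · exact chk_get chk_15 i hi (by omega) (by omega)
  by_cases h16 : i < 68
  · exact chk_get chk_16 i hi (by omega) (by omega)
  by_cases h17 : i < 72
  · exact chk_get chk_17 i hi (by omega) (by omega)
  by_cases h18 : i < 76
  · exact chk_get chk_18 i hi (by omega) (by omega)
  by_cases h19 : i < 80
  · exact chk_get chk_19 i hi (by omega) (by omega)
  by_cases h20 : i < 84
  · exact chk_get chk_20 i hi (by omega) (by omega)
  by_cases h21 : i < 88
  · exact chk_get chk_21 i hi (by omega) (by omega)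
  exact chk_get chk_22 i hi (by omega) (by omega)

end SX

/-- There exist at least 92 pairwise inequivalent s-extremal singly even self-dual
`[56, 28, 10]` codes: singly even self-dual codes of length 56 with minimum weight 10
whose shadows have minimum weight 12. -/
theorem exists_92_sExtremal_56 :
    ∃ f : Fin 92 → Submodule (ZMod 2) (Fin 56 → ZMod 2),
      (∀ i, IsSinglyEvenSelfDual (f i) ∧
        Module.finrank (ZMod 2) (f i) = 28 ∧
        minWt (f i) = 10 ∧
        minWtSet (shadow (f i)) = 12) ∧
      ∀ i j, i ≠ j → ¬ CodeEquiv (f i) (f j) := by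
  exact SX.final SX.chkD_true SX.all_chk
end
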